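/- arXiv:2202.10521 — 3 statements merged into one kernel-verified Lean document; each statement's English description precedes it below -/
import Mathlib

section
/- Let F : ℝⁿ → X be a Bohr almost periodic function. If for every vector a = (a₁,…,aₙ) ∈ ℝⁿ all of whose coordinates are nonzero the Cesàro means (1/k)·Σ_{j=0}^{k−1} F(t + j·a) converge to 0 in X as k → ∞, uniformly in t ∈ ℝⁿ, then F(t) = 0 for all t ∈ ℝⁿ. -/
open Filter Topology

section Aux
open MeasureTheory FourierTransform Convolution

lemma aux_fourier_continuous {n : ℕ} {g : EuclideanSpace ℝ (Fin n) → ℂ} (hg : Integrable g) :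
    Continuous (𝓕 g) :=
  VectorFourier.fourierIntegral_continuous Real.continuous_fourierChar
    (innerSL ℝ).continuous₂ hg

lemma aux_plancherel {n : ℕ} {g : EuclideanSpace ℝ (Fin n) → ℂ} (hg : Integrable g)
    (hg2 : MemLp g 2) : eLpNorm (𝓕 g) 2 volume = eLpNorm g 2 volume := by
  set G : Lp ℂ 2 (volume : Measure (EuclideanSpace ℝ (Fin n))) := hg2.toLp g with hG
  have hFG := Lp.fourier_toTemperedDistribution_eq G
  have hae : (𝓕 g) =ᵐ[volume] (𝓕 G : Lp ℂ 2 (volume : Measure (EuclideanSpace ℝ (Fin n)))) := by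
    refine ae_eq_of_integral_contDiff_smul_eq (aux_fourier_continuous hg).locallyIntegrable
      ((Lp.memLp _).locallyIntegrable (by norm_num)) ?_
    intro φ hφ hφc
    have hc : ContDiff ℝ ((⊤ : ℕ∞) : WithTop ℕ∞) (fun x => (φ x : ℂ)) :=
      Complex.ofRealCLM.contDiff.comp hφ
    have hcs : HasCompactSupport (fun x => (φ x : ℂ)) := hφc.comp_left (g := fun r : ℝ => (r : ℂ)) (by simp)
    set ψ := hcs.toSchwartzMap hc with hψ
    have hψx : ∀ x, ψ x = (φ x : ℂ) := fun x => rfl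
    have h1 := congrArg (fun D => D ψ) hFG
    simp only [TemperedDistribution.fourier_apply] at h1
    rw [Lp.toTemperedDistribution_apply, Lp.toTemperedDistribution_apply] at h1
    have h2 : ∫ x, (𝓕 ψ) x • G x = ∫ x, 𝓕 (ψ : EuclideanSpace ℝ (Fin n) → ℂ) x • g x := by
      refine integral_congr_ae ?_
      filter_upwards [hg2.coeFn_toLp] with x hx
      rw [hx, SchwartzMap.fourier_coe]
    have h3 : ∫ x, 𝓕 (ψ : EuclideanSpace ℝ (Fin n) → ℂ) x • g x = ∫ x, ψ x • 𝓕 g x := by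
      have := VectorFourier.integral_fourierIntegral_smul_eq_flip
        (L := innerₗ (EuclideanSpace ℝ (Fin n))) (μ := volume) (ν := volume)
        (f := (ψ : EuclideanSpace ℝ (Fin n) → ℂ)) (g := g)
        Real.continuous_fourierChar continuous_inner ψ.integrable hg
      rw [flip_innerₗ] at this
      exact this
    have h4 : ∫ x, ψ x • 𝓕 g x = ∫ x, ψ x • (𝓕 G : Lp ℂ 2 (volume : Measure (EuclideanSpace ℝ (Fin n)))) x := by
      rw [← h3, ← h2, h1]
    simpa [hψx] using h4
  rw [eLpNorm_congr_ae hae, ← eLpNorm_congr_ae hg2.coeFn_toLp]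
  have := Lp.norm_fourier_eq G
  rw [Lp.norm_def, Lp.norm_def, ENNReal.toReal_eq_toReal_iff' (Lp.eLpNorm_ne_top _) (Lp.eLpNorm_ne_top _)] at this
  exact this

lemma aux_conv {n : ℕ} {g h : EuclideanSpace ℝ (Fin n) → ℂ} (hg : Continuous g)
    (hgc : HasCompactSupport g) (hh : Continuous h) (hhc : HasCompactSupport h) {ε : ℝ}
    (hb : ∀ ξ, ‖𝓕 g ξ‖ ≤ ε) :
    eLpNorm (h ⋆[ContinuousLinearMap.mul ℂ ℂ, volume] g) 2 volume
      ≤ ENNReal.ofReal ε * eLpNorm h 2 volume := by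
  have hgi : Integrable g := hg.integrable_of_hasCompactSupport hgc
  have hhi : Integrable h := hh.integrable_of_hasCompactSupport hhc
  have hcc : Continuous (h ⋆[ContinuousLinearMap.mul ℂ ℂ, volume] g) :=
    hgc.continuous_convolution_right _ hhi.locallyIntegrable hg
  have hcs : HasCompactSupport (h ⋆[ContinuousLinearMap.mul ℂ ℂ, volume] g) :=
    HasCompactSupport.convolution _ hhc hgc
  rw [← aux_plancherel (hcc.integrable_of_hasCompactSupport hcs)
    (hcc.memLp_of_hasCompactSupport hcs),
    ← aux_plancherel hhi (hh.memLp_of_hasCompactSupport hhc)]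
  refine eLpNorm_le_mul_eLpNorm_of_ae_le_mul (ae_of_all _ fun ξ => ?_) 2
  rw [Real.fourier_mul_convolution_eq hhi hgi, norm_mul, mul_comm]
  exact mul_le_mul_of_nonneg_right (hb ξ) (norm_nonneg _)

end Aux

section AP

/-- Bohr almost periodicity (helper predicate for scalar functions). -/
def AuxAP {n : ℕ} (f : EuclideanSpace ℝ (Fin n) → ℂ) : Prop :=
  ∀ ε : ℝ, 0 < ε → ∃ l : ℝ, 0 < l ∧ ∀ t₀ : EuclideanSpace ℝ (Fin n),
      ∃ τ : EuclideanSpace ℝ (Fin n), ‖τ - t₀‖ ≤ l ∧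
        ∀ t : EuclideanSpace ℝ (Fin n), ‖f (t + τ) - f t‖ ≤ ε

variable {n : ℕ} {f : EuclideanSpace ℝ (Fin n) → ℂ}

lemma aux_bdd (hc : Continuous f) (hap : AuxAP f) : ∃ C : ℝ, 0 < C ∧ ∀ t, ‖f t‖ ≤ C := by
  obtain ⟨l, hl, h⟩ := hap 1 one_pos
  obtain ⟨C, hC⟩ := (isCompact_closedBall (0 : EuclideanSpace ℝ (Fin n)) l).exists_bound_of_continuousOn
    hc.continuousOn
  have hC0 : 0 ≤ C := (norm_nonneg _).trans (hC 0 (by simp [hl.le]))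
  refine ⟨C + 1, by linarith, fun t => ?_⟩
  obtain ⟨τ, hτ, h2⟩ := h (-t)
  have h3 := hC (t + τ) (by rw [mem_closedBall_zero_iff, show t + τ = τ - -t by abel]; exact hτ)
  have h4 := h2 t
  have := norm_sub_norm_le (f t) (f (t + τ))
  rw [norm_sub_rev] at this
  linarith

lemma aux_uc (hc : Continuous f) (hap : AuxAP f) (ε : ℝ) (hε : 0 < ε) :
    ∃ δ : ℝ, 0 < δ ∧ ∀ x y, ‖x - y‖ < δ → ‖f x - f y‖ ≤ ε := by
  obtain ⟨l, hl, h⟩ := hap (ε/3) (by linarith)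
  have huc := (isCompact_closedBall (0 : EuclideanSpace ℝ (Fin n)) (l+1)).uniformContinuousOn_of_continuous
    hc.continuousOn
  rw [Metric.uniformContinuousOn_iff] at huc
  obtain ⟨δ, hδ, h1⟩ := huc (ε/3) (by linarith)
  refine ⟨min δ 1, by positivity, fun x y hxy => ?_⟩
  obtain ⟨τ, hτ, h2⟩ := h (-x)
  have hx : ‖x + τ‖ ≤ l := by convert hτ using 2; abel
  have hy : ‖y + τ‖ ≤ l + 1 := by
    have : y + τ = (x + τ) - (x - y) := by abel
    rw [this]
    have h5 := norm_sub_le (x + τ) (x - y)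
    have h6 := hxy.le.trans (min_le_right _ _)
    linarith
  have h3 := h1 (x + τ) (by rw [mem_closedBall_zero_iff]; linarith) (y + τ)
    (by rw [mem_closedBall_zero_iff]; linarith)
    (by rw [dist_eq_norm, show x + τ - (y + τ) = x - y by abel]; exact hxy.trans_le (min_le_left _ _))
  rw [dist_eq_norm] at h3
  have h4 := h2 x
  have h5 := h2 y
  have : f x - f y = -(f (x + τ) - f x) + (f (x + τ) - f (y + τ)) + (f (y + τ) - f y) := by ring
  rw [this]
  have h6 := norm_add₃_le (a := -(f (x + τ) - f x)) (b := (f (x + τ) - f (y + τ))) (c := (f (y + τ) - f y))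
  rw [norm_neg] at h6
  linarith

lemma aux_tb (hc : Continuous f) (hap : AuxAP f) (ε : ℝ) (hε : 0 < ε) :
    ∃ S : Finset (EuclideanSpace ℝ (Fin n)), ∀ s, ∃ c ∈ S, ∀ t, ‖f (t + s) - f (t + c)‖ ≤ ε := by
  obtain ⟨δ, hδ, h1⟩ := aux_uc hc hap (ε/2) (by linarith)
  obtain ⟨l, hl, h⟩ := hap (ε/2) (by linarith)
  obtain ⟨S, -, hSf, hS⟩ := (isCompact_closedBall (0 : EuclideanSpace ℝ (Fin n)) l).finite_cover_balls hδ
  refine ⟨hSf.toFinset, fun s => ?_⟩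
  obtain ⟨τ, hτ, h2⟩ := h (-s)
  have hx : s + τ ∈ Metric.closedBall (0 : EuclideanSpace ℝ (Fin n)) l := by
    rw [mem_closedBall_zero_iff, show s + τ = τ - -s by abel]; exact hτ
  have := hS hx
  simp only [Set.mem_iUnion] at this
  obtain ⟨c, hcS, hcb⟩ := this
  refine ⟨c, by simpa using hcS, fun t => ?_⟩
  rw [Metric.mem_ball, dist_eq_norm] at hcb
  have h3 := h1 (t + s + τ) (t + c) (by rw [show t + s + τ - (t + c) = s + τ - c by abel]; exact hcb)
  have h4 := h2 (t + s)
  have : f (t + s) - f (t + c) = (f (t + s + τ) - f (t + c)) - (f (t + s + τ) - f (t + s)) := by ring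
  rw [this]
  have := norm_sub_le (f (t + s + τ) - f (t + c)) (f (t + s + τ) - f (t + s))
  linarith

end AP

section Window
open MeasureTheory FourierTransform Convolution

/-- Tent window. -/
noncomputable def auxW {n : ℕ} (x : EuclideanSpace ℝ (Fin n)) : ℝ := max 0 (1 - ‖x‖)

/-- Windowed, dilated and shifted function. -/
noncomputable def auxG {n : ℕ} (f : EuclideanSpace ℝ (Fin n) → ℂ) (T : ℝ)
    (b x : EuclideanSpace ℝ (Fin n)) : ℂ := f (T • x + b) * (auxW x : ℂ)

variable {n : ℕ} {f : EuclideanSpace ℝ (Fin n) → ℂ}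

lemma auxW_cont : Continuous (auxW (n := n)) := by unfold auxW; fun_prop

lemma auxW_nonneg (x : EuclideanSpace ℝ (Fin n)) : 0 ≤ auxW x := le_max_left _ _

lemma auxW_le_one (x : EuclideanSpace ℝ (Fin n)) : auxW x ≤ 1 :=
  max_le zero_le_one (by linarith [norm_nonneg x])

lemma auxW_zero {x : EuclideanSpace ℝ (Fin n)} (hx : 1 ≤ ‖x‖) : auxW x = 0 :=
  max_eq_left (by linarith)

lemma auxW_lip (x y : EuclideanSpace ℝ (Fin n)) : |auxW x - auxW y| ≤ ‖x - y‖ := by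
  unfold auxW
  refine (abs_max_sub_max_le_max _ _ _ _).trans ?_
  refine max_le (by simp) ?_
  rw [show (1 - ‖x‖) - (1 - ‖y‖) = ‖y‖ - ‖x‖ by ring, norm_sub_rev]
  exact abs_norm_sub_norm_le y x

lemma aux_cs {φ : EuclideanSpace ℝ (Fin n) → ℂ} {r : ℝ} (h : ∀ x, r < ‖x‖ → φ x = 0) :
    HasCompactSupport φ :=
  HasCompactSupport.intro (isCompact_closedBall 0 r) fun x hx => h x (by simpa using hx)

lemma auxG_cont (hc : Continuous f) (T : ℝ) (b : EuclideanSpace ℝ (Fin n)) :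
    Continuous (auxG f T b) := by
  have := auxW_cont (n := n)
  unfold auxG; fun_prop

lemma auxG_zero (T : ℝ) (b : EuclideanSpace ℝ (Fin n)) (x) (hx : 1 < ‖x‖) : auxG f T b x = 0 := by
  simp [auxG, auxW_zero hx.le]

/-- Volume constant. -/
noncomputable def auxV (n : ℕ) : ℝ :=
  (volume : Measure (EuclideanSpace ℝ (Fin n))).real (Metric.closedBall 0 2)

lemma auxV_nonneg : 0 ≤ auxV n := measureReal_nonneg

lemma aux_int {φ : EuclideanSpace ℝ (Fin n) → ℂ} {M : ℝ} (h : ∀ x, 2 < ‖x‖ → φ x = 0)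
    (hM : ∀ x, ‖φ x‖ ≤ M) : ‖∫ x, φ x‖ ≤ M * auxV n := by
  rw [← setIntegral_eq_integral_of_forall_compl_eq_zero (s := Metric.closedBall 0 2)
    (fun x hx => h x (by simpa using hx))]
  exact norm_setIntegral_le_of_norm_le_const (isCompact_closedBall _ _).measure_lt_top
    (fun x _ => hM x)

lemma aux_shift1 (hc : Continuous f) {C : ℝ} (hC : ∀ t, ‖f t‖ ≤ C) {T : ℝ} (hT : 0 < T)
    (b v ζ : EuclideanSpace ℝ (Fin n)) (hv : ‖v‖ ≤ T) :
    ‖𝓕 (auxG f T b) (T • ζ) - ∫ x, (Real.fourierChar (-inner ℝ x (T • ζ)) : ℂ) *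
        ((Real.fourierChar (-inner ℝ v ζ) : ℂ) * f (T • x + b + v)) * (auxW x : ℂ)‖
      ≤ C * (‖v‖ / T) * auxV n := by
  have hw := auxW_cont (n := n)
  have he := Real.continuous_fourierChar
  have e1 : 𝓕 (auxG f T b) (T • ζ) = ∫ x, (Real.fourierChar (-inner ℝ x (T • ζ)) : ℂ) *
        ((Real.fourierChar (-inner ℝ v ζ) : ℂ) * f (T • x + b + v)) * (auxW (x + T⁻¹ • v) : ℂ) := by
    rw [Real.fourier_eq, ← integral_add_right_eq_self _ (T⁻¹ • v)]
    refine integral_congr_ae (ae_of_all _ fun x => ?_)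
    have h1 : -inner ℝ (x + T⁻¹ • v) (T • ζ) = -inner ℝ x (T • ζ) + -inner ℝ v ζ := by
      rw [inner_add_left, real_inner_smul_left, real_inner_smul_right v]
      field_simp
      ring
    have h2 : T • (x + T⁻¹ • v) + b = T • x + b + v := by
      rw [smul_add, smul_inv_smul₀ hT.ne']; abel
    simp only [auxG, h2, Circle.smul_def, h1, AddChar.map_add_eq_mul, Circle.coe_mul, smul_eq_mul]
    ring
  have hh : ‖T⁻¹ • v‖ = ‖v‖ / T := by
    rw [norm_smul, norm_inv, Real.norm_of_nonneg hT.le]; ring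
  have hh1 : ‖v‖ / T ≤ 1 := (div_le_one hT).2 hv
  have z1 : ∀ x : EuclideanSpace ℝ (Fin n), 2 < ‖x‖ → auxW (x + T⁻¹ • v) = 0 := by
    intro x hx
    refine auxW_zero ?_
    have := norm_sub_le (x + T⁻¹ • v) (T⁻¹ • v)
    rw [add_sub_cancel_right] at this
    linarith
  have z2 : ∀ x : EuclideanSpace ℝ (Fin n), 2 < ‖x‖ → auxW x = 0 := fun x hx => auxW_zero (by linarith)
  rw [e1, ← integral_sub]
  · refine aux_int (fun x hx => ?_) (fun x => ?_)
    · simp [z1 x hx, z2 x hx]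
    · rw [← mul_sub, norm_mul, norm_mul, norm_mul, Circle.norm_coe, Circle.norm_coe, one_mul, one_mul,
        ← Complex.ofReal_sub, Complex.norm_real]
      refine mul_le_mul (hC _) ?_ (norm_nonneg _) ((norm_nonneg _).trans (hC 0))
      have := auxW_lip (x + T⁻¹ • v) x
      rwa [add_sub_cancel_left, hh] at this
  · refine Continuous.integrable_of_hasCompactSupport (by fun_prop) (aux_cs (r := 2) fun x hx => ?_)
    simp [z1 x hx]
  · refine Continuous.integrable_of_hasCompactSupport (by fun_prop) (aux_cs (r := 2) fun x hx => ?_)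
    simp [z2 x hx]

lemma aux_shift (hc : Continuous f) {C : ℝ} (hC : ∀ t, ‖f t‖ ≤ C) {T : ℝ} (hT : 0 < T)
    (b a ζ : EuclideanSpace ℝ (Fin n)) (K : ℕ) (hK : 0 < K) (hv : K * ‖a‖ ≤ T) {A : ℝ}
    (hA : ∀ t, ‖∑ j ∈ Finset.range K, (Real.fourierChar (-inner ℝ ((j : ℝ) • a) ζ) : ℂ)
      * f (t + (j : ℝ) • a)‖ ≤ K * A) :
    ‖𝓕 (auxG f T b) (T • ζ)‖ ≤ (A + C * (K * ‖a‖ / T)) * auxV n := by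
  have hw := auxW_cont (n := n)
  have he := Real.continuous_fourierChar
  have hC0 : 0 ≤ C := (norm_nonneg _).trans (hC 0)
  have hK' : (0 : ℝ) < K := by exact_mod_cast hK
  set I : ℕ → EuclideanSpace ℝ (Fin n) → ℂ := fun j x => (Real.fourierChar (-inner ℝ x (T • ζ)) : ℂ) *
        ((Real.fourierChar (-inner ℝ ((j : ℝ) • a) ζ) : ℂ) * f (T • x + b + (j : ℝ) • a)) * (auxW x : ℂ) with hI
  have hIint : ∀ j, Integrable (I j) := by
    intro j
    refine Continuous.integrable_of_hasCompactSupport (by fun_prop) (aux_cs (r := 2) fun x hx => ?_)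
    simp [hI, auxW_zero (show 1 ≤ ‖x‖ by linarith)]
  have h1 : ∀ j ∈ Finset.range K, ‖𝓕 (auxG f T b) (T • ζ) - ∫ x, I j x‖
      ≤ C * (K * ‖a‖ / T) * auxV n := by
    intro j hj
    have hjK : (j : ℝ) ≤ K := by exact_mod_cast (Finset.mem_range.1 hj).le
    have hn : ‖(j : ℝ) • a‖ ≤ K * ‖a‖ := by
      rw [norm_smul, Real.norm_of_nonneg (Nat.cast_nonneg j)]
      gcongr
    refine (aux_shift1 hc hC hT b ((j : ℝ) • a) ζ (hn.trans hv)).trans ?_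
    have := auxV_nonneg (n := n)
    gcongr
  have h2 : ‖∑ j ∈ Finset.range K, ∫ x, I j x‖ ≤ K * A * auxV n := by
    rw [← integral_finsetSum _ (fun j _ => hIint j)]
    refine aux_int (fun x hx => ?_) (fun x => ?_)
    · simp [hI, auxW_zero (show 1 ≤ ‖x‖ by linarith)]
    · simp only [hI]
      rw [← Finset.sum_mul, ← Finset.mul_sum, norm_mul, norm_mul, Circle.norm_coe, one_mul,
        Complex.norm_real, Real.norm_of_nonneg (auxW_nonneg x)]
      exact (mul_le_of_le_one_right (norm_nonneg _) (auxW_le_one x)).trans (hA _)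
  have h3 : (K : ℂ) * 𝓕 (auxG f T b) (T • ζ) =
      ∑ j ∈ Finset.range K, (𝓕 (auxG f T b) (T • ζ) - ∫ x, I j x) + ∑ j ∈ Finset.range K, ∫ x, I j x := by
    rw [← Finset.sum_add_distrib]; simp
  have h4 : K * ‖𝓕 (auxG f T b) (T • ζ)‖ ≤ K * (C * (K * ‖a‖ / T) * auxV n) + K * A * auxV n := by
    have : K * ‖𝓕 (auxG f T b) (T • ζ)‖ = ‖(K : ℂ) * 𝓕 (auxG f T b) (T • ζ)‖ := by simp
    rw [this, h3]
    refine (norm_add_le _ _).trans (add_le_add ?_ h2)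
    refine (norm_sum_le_of_le _ h1).trans ?_
    simp
  refine le_of_mul_le_mul_left (h4.trans (le_of_eq ?_)) hK'
  ring

/-- Choice of a vector with nonzero coordinates and integral pairing with `ζ`. -/
lemma aux_vec (ζ : EuclideanSpace ℝ (Fin n)) : ∃ a : EuclideanSpace ℝ (Fin n),
    (∀ i, a i ≠ 0) ∧ (inner ℝ a ζ = 0 ∨ inner ℝ a ζ = 1) := by
  set s : EuclideanSpace ℝ (Fin n) := WithLp.toLp 2 (fun i => if ζ i < 0 then (-1 : ℝ) else 1) with hs
  have hsi : ∀ i, s i ≠ 0 := by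
    intro i
    simp only [hs]
    split_ifs <;> norm_num
  by_cases h : inner ℝ s ζ = 0
  · exact ⟨s, hsi, Or.inl h⟩
  · refine ⟨(inner ℝ s ζ)⁻¹ • s, fun i => ?_, Or.inr ?_⟩
    · simpa using ⟨h, hsi i⟩
    · rw [real_inner_smul_left, inv_mul_cancel₀ h]

lemma aux_freq (hc : Continuous f) (hap : AuxAP f)
    (hces : ∀ a : EuclideanSpace ℝ (Fin n), (∀ i : Fin n, a i ≠ 0) →
      ∀ ε : ℝ, 0 < ε → ∃ K : ℕ, ∀ k : ℕ, K ≤ k →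
        ∀ t : EuclideanSpace ℝ (Fin n),
          ‖∑ j ∈ Finset.range k, f (t + (j : ℝ) • a)‖ ≤ k * ε)
    {A : ℝ} (hA : 0 < A) : ∃ D : ℝ, ∀ ζ : EuclideanSpace ℝ (Fin n),
      ∃ (a : EuclideanSpace ℝ (Fin n)) (K : ℕ), 0 < K ∧ K * ‖a‖ ≤ D ∧
      ∀ t, ‖∑ j ∈ Finset.range K, (Real.fourierChar (-inner ℝ ((j : ℝ) • a) ζ) : ℂ)
      * f (t + (j : ℝ) • a)‖ ≤ K * A := by
  obtain ⟨C, hC0, hC⟩ := aux_bdd hc hap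
  obtain ⟨δ, hδ, huc⟩ := aux_uc hc hap A hA
  have he := Real.continuous_fourierChar
  have hcomp : ∃ D : ℝ, ∀ ζ ∈ Metric.closedBall (0 : EuclideanSpace ℝ (Fin n)) (1/δ),
      ∃ (a : EuclideanSpace ℝ (Fin n)) (K : ℕ), 0 < K ∧ K * ‖a‖ ≤ D ∧
      ∀ t, ‖∑ j ∈ Finset.range K, (Real.fourierChar (-inner ℝ ((j : ℝ) • a) ζ) : ℂ)
      * f (t + (j : ℝ) • a)‖ ≤ K * A := by
    refine (isCompact_closedBall (0 : EuclideanSpace ℝ (Fin n)) (1/δ)).induction_on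
      (p := fun s => ∃ D : ℝ, ∀ ζ ∈ s,
      ∃ (a : EuclideanSpace ℝ (Fin n)) (K : ℕ), 0 < K ∧ K * ‖a‖ ≤ D ∧
      ∀ t, ‖∑ j ∈ Finset.range K, (Real.fourierChar (-inner ℝ ((j : ℝ) • a) ζ) : ℂ)
      * f (t + (j : ℝ) • a)‖ ≤ K * A) ⟨0, by simp⟩ ?_ ?_ ?_
    · rintro s t hst ⟨D, hD⟩
      exact ⟨D, fun ζ hζ => hD ζ (hst hζ)⟩
    · rintro s t ⟨D, hD⟩ ⟨D', hD'⟩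
      refine ⟨max D D', fun ζ hζ => ?_⟩
      rcases hζ with hζ | hζ
      · obtain ⟨a, K, h1, h2, h3⟩ := hD ζ hζ
        exact ⟨a, K, h1, h2.trans (le_max_left _ _), h3⟩
      · obtain ⟨a, K, h1, h2, h3⟩ := hD' ζ hζ
        exact ⟨a, K, h1, h2.trans (le_max_right _ _), h3⟩
    · intro ζ₀ _
      obtain ⟨a, ha, hint⟩ := aux_vec ζ₀
      obtain ⟨K₀, hK₀⟩ := hces a ha (A/2) (by linarith)
      set K := max K₀ 1 with hK
      have hK1 : 0 < K := lt_of_lt_of_le one_pos (le_max_right _ _)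
      have hev : ∀ᶠ ζ in 𝓝 ζ₀, ∀ j ∈ Finset.range K,
          ‖(Real.fourierChar (-inner ℝ ((j : ℝ) • a) ζ) : ℂ) - 1‖ < A / (2 * C) := by
        rw [Filter.eventually_all_finset]
        intro j _
        have hcont : Continuous fun ζ : EuclideanSpace ℝ (Fin n) =>
          ‖(Real.fourierChar (-inner ℝ ((j : ℝ) • a) ζ) : ℂ) - 1‖ := by fun_prop
        refine hcont.continuousAt.eventually_lt_const ?_
        have : (Real.fourierChar (-inner ℝ ((j : ℝ) • a) ζ₀) : ℂ) = 1 := by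
          rw [real_inner_smul_left, Real.fourierChar_apply, Complex.exp_eq_one_iff]
          rcases hint with h | h
          · exact ⟨0, by simp [h]⟩
          · refine ⟨-j, ?_⟩
            rw [h]; push_cast; ring
        change ‖(Real.fourierChar (-inner ℝ ((j : ℝ) • a) ζ₀) : ℂ) - 1‖ < A / (2 * C)
        rw [this, sub_self, norm_zero]; positivity
      refine ⟨_, mem_nhdsWithin_of_mem_nhds hev, K * ‖a‖, fun ζ hζ => ⟨a, K, hK1, le_rfl, fun t => ?_⟩⟩
      have h5 : ∑ j ∈ Finset.range K, (Real.fourierChar (-inner ℝ ((j : ℝ) • a) ζ) : ℂ)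
          * f (t + (j : ℝ) • a) = ∑ j ∈ Finset.range K, f (t + (j : ℝ) • a) +
          ∑ j ∈ Finset.range K, ((Real.fourierChar (-inner ℝ ((j : ℝ) • a) ζ) : ℂ) - 1)
          * f (t + (j : ℝ) • a) := by
        rw [← Finset.sum_add_distrib]
        exact Finset.sum_congr rfl fun j _ => by ring
      have h6 : ‖∑ j ∈ Finset.range K, ((Real.fourierChar (-inner ℝ ((j : ℝ) • a) ζ) : ℂ) - 1)
          * f (t + (j : ℝ) • a)‖ ≤ ∑ j ∈ Finset.range K, A / 2 := by
        refine norm_sum_le_of_le _ fun j hj => ?_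
        rw [norm_mul]
        refine (mul_le_mul (hζ j hj).le (hC _) (norm_nonneg _) (by positivity)).trans (le_of_eq ?_)
        field_simp
      rw [h5]
      refine (norm_add_le _ _).trans ((add_le_add (hK₀ K (le_max_left _ _) t) h6).trans (le_of_eq ?_))
      simp
      ring
  obtain ⟨D, hD⟩ := hcomp
  refine ⟨max D (2 * δ), fun ζ => ?_⟩
  by_cases hζ : ‖ζ‖ ≤ 1/δ
  · obtain ⟨a, K, h1, h2, h3⟩ := hD ζ (by simpa using hζ)
    exact ⟨a, K, h1, h2.trans (le_max_left _ _), h3⟩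
  · push Not at hζ
    have hζ0 : 0 < ‖ζ‖ := lt_trans (by positivity) hζ
    have hna : ‖(1 / (2 * ‖ζ‖ ^ 2)) • ζ‖ = 1 / (2 * ‖ζ‖) := by
      rw [norm_smul, Real.norm_of_nonneg (by positivity)]
      field_simp
    have hna' : ‖(1 / (2 * ‖ζ‖ ^ 2)) • ζ‖ < δ := by
      rw [hna, div_lt_iff₀ (by positivity)]
      rw [div_lt_iff₀ hδ] at hζ
      nlinarith
    refine ⟨(1 / (2 * ‖ζ‖ ^ 2)) • ζ, 2, by norm_num, ?_, fun t => ?_⟩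
    · refine le_trans ?_ (le_max_right _ _)
      push_cast
      linarith
    · have hin : inner ℝ ((1 / (2 * ‖ζ‖ ^ 2)) • ζ) ζ = 1 / 2 := by
        rw [real_inner_smul_left, real_inner_self_eq_norm_sq]
        field_simp
      have hm : (Real.fourierChar (-(1 / 2 : ℝ)) : ℂ) = -1 := by
        rw [Real.fourierChar_apply]
        rw [show ((2 * Real.pi * -(1 / 2 : ℝ) : ℝ) : ℂ) * Complex.I = -(Real.pi * Complex.I) by
          push_cast; ring]
        rw [Complex.exp_neg, Complex.exp_pi_mul_I]; norm_num
      have h0 := huc t (t + (1 / (2 * ‖ζ‖ ^ 2)) • ζ) (by rw [sub_add_cancel_left, norm_neg]; exact hna')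
      rw [Finset.sum_range_succ, Finset.sum_range_one, Nat.cast_zero, Nat.cast_one, zero_smul, one_smul, hin, hm]
      simp only [inner_zero_left, neg_zero, AddChar.map_zero_eq_one, Circle.coe_one, one_mul, add_zero, neg_mul,
        ← sub_eq_add_neg]
      refine h0.trans ?_
      push_cast
      linarith

lemma aux_sup (hc : Continuous f) (hap : AuxAP f)
    (hces : ∀ a : EuclideanSpace ℝ (Fin n), (∀ i : Fin n, a i ≠ 0) →
      ∀ ε : ℝ, 0 < ε → ∃ K : ℕ, ∀ k : ℕ, K ≤ k →
        ∀ t : EuclideanSpace ℝ (Fin n),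
          ‖∑ j ∈ Finset.range k, f (t + (j : ℝ) • a)‖ ≤ k * ε)
    {ε : ℝ} (hε : 0 < ε) : ∃ T : ℝ, 0 < T ∧ ∀ b ξ, ‖𝓕 (auxG f T b) ξ‖ ≤ ε := by
  obtain ⟨C, hC0, hC⟩ := aux_bdd hc hap
  have hV := auxV_nonneg (n := n)
  set A : ℝ := ε / (2 * (auxV n + 1)) with hAdef
  have hA : 0 < A := by positivity
  obtain ⟨D, hD⟩ := aux_freq hc hap hces hA
  have hD0 : 0 ≤ D := by
    obtain ⟨a, K, h1, h2, h3⟩ := hD 0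
    exact le_trans (by positivity) h2
  refine ⟨D + C * D / A + 1, by positivity, fun b ξ => ?_⟩
  set T := D + C * D / A + 1 with hTdef
  have hT : 0 < T := by positivity
  obtain ⟨a, K, h1, h2, h3⟩ := hD (T⁻¹ • ξ)
  have hDT : D ≤ T := by
    have : 0 ≤ C * D / A := by positivity
    linarith
  have hCDT : C * D ≤ A * T := by
    have : A * T = A * D + C * D + A := by rw [hTdef]; field_simp
    rw [this]; nlinarith
  have h4 := aux_shift hc hC hT b a (T⁻¹ • ξ) K h1 (h2.trans hDT) h3
  rw [smul_inv_smul₀ hT.ne'] at h4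
  have h5 : C * (K * ‖a‖ / T) ≤ A := by
    rw [← mul_div_assoc, div_le_iff₀ hT]
    exact (mul_le_mul_of_nonneg_left h2 hC0.le).trans hCDT
  have h6 : (A + C * (K * ‖a‖ / T)) * auxV n ≤ (A + A) * (auxV n + 1) := by
    gcongr; linarith
  refine h4.trans (h6.trans (le_of_eq ?_))
  rw [hAdef]; field_simp; ring

end Window

section Final
open MeasureTheory FourierTransform Convolution

variable {n : ℕ} {f : EuclideanSpace ℝ (Fin n) → ℂ}

/-- Reflected conjugate windowed function. -/
noncomputable def auxH (f : EuclideanSpace ℝ (Fin n) → ℂ) (T : ℝ)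
    (d x : EuclideanSpace ℝ (Fin n)) : ℂ := (starRingEnd ℂ) (f (-(T • x) + d)) * (auxW x : ℂ)

lemma aux_lower (hc : Continuous f) {C : ℝ} (hC : ∀ t, ‖f t‖ ≤ C) {T : ℝ}
    (S : Finset (EuclideanSpace ℝ (Fin n))) {η ε₁ : ℝ} (hη : 0 ≤ η)
    (hS : ∀ x, η ^ 2 / 4 ≤ ∑ b ∈ S, ‖f (x + b)‖ ^ 2)
    (hε₁ : (S.card : ℝ) * (C * ε₁) ≤ η ^ 2 / 8)
    (u c : EuclideanSpace ℝ (Fin n)) (hu : u ∈ Metric.closedBall (0 : EuclideanSpace ℝ (Fin n)) (1/4))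
    (hcu : ∀ t, ‖f (t + T • u) - f (t + c)‖ ≤ ε₁) :
    η ^ 2 / 8 * ((1 / 4) * (volume : Measure (EuclideanSpace ℝ (Fin n))).real
      (Metric.closedBall 0 (1/4))) ≤
    ∑ b ∈ S, ‖(auxH f T (c + b) ⋆[ContinuousLinearMap.mul ℂ ℂ, volume] auxG f T b) u‖ := by
  have hw := auxW_cont (n := n)
  have hC0 : 0 ≤ C := (norm_nonneg _).trans (hC 0)
  set I : EuclideanSpace ℝ (Fin n) → EuclideanSpace ℝ (Fin n) → ℂ :=
    fun b t => auxH f T (c + b) t * auxG f T b (u - t) with hI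
  have hIint : ∀ b, Integrable (I b) := by
    intro b
    refine Continuous.integrable_of_hasCompactSupport ?_ (aux_cs (r := 1) fun x hx => ?_)
    · simp only [hI, auxH, auxG]
      have : Continuous (starRingEnd ℂ) := Complex.continuous_conj
      fun_prop
    · simp [hI, auxH, auxW_zero hx.le]
  have hreint : Integrable (fun t => (∑ b ∈ S, I b t).re) :=
    (integrable_finsetSum _ fun b _ => hIint b).re
  have hwint : Integrable (fun t : EuclideanSpace ℝ (Fin n) => auxW t * auxW (u - t)) := by
    refine Continuous.integrable_of_hasCompactSupport (by fun_prop)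
      (HasCompactSupport.intro (isCompact_closedBall 0 1) fun x hx => ?_)
    have : 1 < ‖x‖ := by simpa using hx
    simp [auxW_zero this.le]
  have h1 : (∫ t, (∑ b ∈ S, I b t).re) ≤
      ∑ b ∈ S, ‖(auxH f T (c + b) ⋆[ContinuousLinearMap.mul ℂ ℂ, volume] auxG f T b) u‖ := by
    have e1 : (∫ t, (∑ b ∈ S, I b t).re) = (∑ b ∈ S, ∫ t, I b t).re := by
      rw [← integral_finsetSum _ fun b _ => hIint b]
      exact integral_re (integrable_finsetSum _ fun b _ => hIint b)
    rw [e1]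
    refine (Complex.re_le_norm _).trans ((norm_sum_le _ _).trans (le_of_eq ?_))
    rfl
  have h2 : ∀ t, η ^ 2 / 8 * (auxW t * auxW (u - t)) ≤ (∑ b ∈ S, I b t).re := by
    intro t
    have hww : 0 ≤ auxW t * auxW (u - t) := mul_nonneg (auxW_nonneg _) (auxW_nonneg _)
    have h3 : ∀ b, (‖f (-(T • t) + c + b)‖ ^ 2 - C * ε₁) * (auxW t * auxW (u - t)) ≤ (I b t).re := by
      intro b
      set z := f (-(T • t) + c + b) with hz
      set z' := f (T • (u - t) + b) with hz'
      have e : I b t = ((starRingEnd ℂ) z * z') * ((auxW t * auxW (u - t) : ℝ) : ℂ) := by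
        simp only [hI, auxH, auxG, hz, hz', add_assoc]
        push_cast; ring
      have hd : ‖z' - z‖ ≤ ε₁ := by
        have := hcu (-(T • t) + b)
        rw [show -(T • t) + b + T • u = T • (u - t) + b by rw [smul_sub]; abel,
          show -(T • t) + b + c = -(T • t) + c + b by abel] at this
        exact this
      have e2 : (starRingEnd ℂ) z * z' = ((‖z‖ ^ 2 : ℝ) : ℂ) + (starRingEnd ℂ) z * (z' - z) := by
        push_cast; rw [← Complex.conj_mul']; ring
      have h4 : -(C * ε₁) ≤ ((starRingEnd ℂ) z * (z' - z)).re := by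
        have h5 := Complex.abs_re_le_norm ((starRingEnd ℂ) z * (z' - z))
        rw [norm_mul, RCLike.norm_conj] at h5
        have h6 : ‖z‖ * ‖z' - z‖ ≤ C * ε₁ := mul_le_mul (hC _) hd (norm_nonneg _) hC0
        exact (abs_le.1 (h5.trans h6)).1
      rw [e, Complex.re_mul_ofReal]
      refine mul_le_mul_of_nonneg_right ?_ hww
      rw [e2, Complex.add_re, Complex.ofReal_re]
      linarith
    rw [Complex.re_sum]
    refine le_trans ?_ (Finset.sum_le_sum fun b _ => h3 b)
    rw [← Finset.sum_mul, Finset.sum_sub_distrib, Finset.sum_const, nsmul_eq_mul]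
    refine mul_le_mul_of_nonneg_right ?_ hww
    have := hS (-(T • t) + c)
    linarith
  have h3 : (∫ t, η ^ 2 / 8 * (auxW t * auxW (u - t))) ≤ ∫ t, (∑ b ∈ S, I b t).re :=
    integral_mono (hwint.const_mul _) hreint h2
  rw [integral_const_mul] at h3
  refine le_trans ?_ (h3.trans h1)
  refine mul_le_mul_of_nonneg_left ?_ (by positivity)
  refine le_trans ?_ (setIntegral_le_integral (s := Metric.closedBall 0 (1/4)) hwint
    (ae_of_all _ fun t => mul_nonneg (auxW_nonneg _) (auxW_nonneg _)))
  have : (1 / 4) * (volume : Measure (EuclideanSpace ℝ (Fin n))).real (Metric.closedBall 0 (1/4))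
      = ∫ t in Metric.closedBall (0 : EuclideanSpace ℝ (Fin n)) (1/4), (1 / 4 : ℝ) := by
    simp [mul_comm]
  rw [this]
  refine setIntegral_mono_on (integrableOn_const (isCompact_closedBall _ _).measure_lt_top.ne)
    hwint.integrableOn measurableSet_closedBall fun t ht => ?_
  rw [mem_closedBall_zero_iff] at ht hu
  have a1 : 1 / 2 ≤ auxW t := le_trans (by linarith) (le_max_right _ _)
  have a2 : 1 / 2 ≤ auxW (u - t) :=
    le_trans (by linarith [norm_sub_le u t]) (le_max_right _ _)
  nlinarith

lemma aux_scalar (hc : Continuous f) (hap : AuxAP f)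
    (hces : ∀ a : EuclideanSpace ℝ (Fin n), (∀ i : Fin n, a i ≠ 0) →
      ∀ ε : ℝ, 0 < ε → ∃ K : ℕ, ∀ k : ℕ, K ≤ k →
        ∀ t : EuclideanSpace ℝ (Fin n),
          ‖∑ j ∈ Finset.range k, f (t + (j : ℝ) • a)‖ ≤ k * ε)
    (t₀ : EuclideanSpace ℝ (Fin n)) : f t₀ = 0 := by
  classical
  by_contra hne
  obtain ⟨C, hC0, hC⟩ := aux_bdd hc hap
  set η := ‖f t₀‖ with hηdef
  have hη : 0 < η := norm_pos_iff.2 hne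
  obtain ⟨S', hS'⟩ := aux_tb hc hap (η / 2) (by linarith)
  set S := S'.image (fun c => t₀ + c) with hSdef
  have hS : ∀ x, η ^ 2 / 4 ≤ ∑ b ∈ S, ‖f (x + b)‖ ^ 2 := by
    intro x
    obtain ⟨c, hcS, hcc⟩ := hS' (-x)
    have h1 := hcc (t₀ + x)
    rw [add_neg_cancel_right] at h1
    have h2 := norm_sub_norm_le (f t₀) (f (t₀ + x + c))
    have h3 : η / 2 ≤ ‖f (x + (t₀ + c))‖ := by
      rw [show x + (t₀ + c) = t₀ + x + c by abel]; linarith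
    refine le_trans ?_ (Finset.single_le_sum (f := fun b => ‖f (x + b)‖ ^ 2)
      (fun b _ => by positivity) (Finset.mem_image_of_mem _ hcS))
    nlinarith
  set ε₁ := η ^ 2 / (8 * ((S.card : ℝ) + 1) * C) with hε₁def
  have hε₁ : 0 < ε₁ := by positivity
  have hε₁' : (S.card : ℝ) * (C * ε₁) ≤ η ^ 2 / 8 := by
    have e : ((S.card : ℝ) + 1) * (C * ε₁) = η ^ 2 / 8 := by rw [hε₁def]; field_simp
    rw [← e]
    have : 0 < C * ε₁ := by positivity
    nlinarith
  obtain ⟨R, hR⟩ := aux_tb hc hap ε₁ hε₁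
  set B := Metric.closedBall (0 : EuclideanSpace ℝ (Fin n)) (1/4) with hB
  have hBpos : 0 < (volume : Measure (EuclideanSpace ℝ (Fin n))) B :=
    Metric.measure_closedBall_pos _ _ (by norm_num)
  have hBfin : (volume : Measure (EuclideanSpace ℝ (Fin n))) B ≠ ⊤ :=
    (isCompact_closedBall _ _).measure_lt_top.ne
  set κ : ℝ := η ^ 2 / 8 * ((1 / 4) * (volume : Measure (EuclideanSpace ℝ (Fin n))).real B) with hκdef
  have hκ : 0 < κ := by
    have : 0 < (volume : Measure (EuclideanSpace ℝ (Fin n))).real B := ENNReal.toReal_pos hBpos.ne' hBfin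
    positivity
  set L := eLpNorm (fun _ : EuclideanSpace ℝ (Fin n) => κ) 2 (volume.restrict B) with hL
  have hL0 : L ≠ 0 := by
    have hr : volume.restrict B ≠ 0 := by
      rw [Ne, Measure.restrict_eq_zero]; exact hBpos.ne'
    rw [hL, eLpNorm_const κ (by norm_num) hr]
    refine mul_ne_zero (by simpa using hκ.ne') ?_
    rw [Measure.restrict_apply_univ]
    simp [ENNReal.rpow_eq_zero_iff, hBpos.ne', hBfin]
  set N := eLpNorm (auxW (n := n)) 2 volume with hN
  have hNfin : N ≠ ⊤ := by
    refine (auxW_cont.memLp_of_hasCompactSupport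
      (HasCompactSupport.intro (isCompact_closedBall 0 1) fun x hx => ?_)).eLpNorm_ne_top
    have : 1 < ‖x‖ := by simpa using hx
    exact auxW_zero this.le
  set P := R ×ˢ S with hP
  obtain ⟨e, he, heL⟩ := ENNReal.exists_nnreal_pos_mul_lt
    (a := (P.card : ENNReal) * (ENNReal.ofReal C * N)) (b := L)
    (ENNReal.mul_ne_top (by simp) (ENNReal.mul_ne_top (by simp) hNfin)) hL0
  obtain ⟨T, hT, hsup⟩ := aux_sup hc hap hces (ε := e) (by exact_mod_cast he)
  have hHc : ∀ d, Continuous (auxH f T d) := by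
    intro d
    have h1 : Continuous (starRingEnd ℂ) := Complex.continuous_conj
    have h2 := auxW_cont (n := n)
    unfold auxH
    fun_prop
  have hHs : ∀ d, HasCompactSupport (auxH f T d) := fun d =>
    aux_cs (r := 1) fun x hx => by simp [auxH, auxW_zero hx.le]
  have hHn : ∀ d, eLpNorm (auxH f T d) 2 volume ≤ ENNReal.ofReal C * N := by
    intro d
    refine eLpNorm_le_mul_eLpNorm_of_ae_le_mul (ae_of_all _ fun x => ?_) 2
    simp only [auxH, norm_mul, RCLike.norm_conj, Complex.norm_real]
    exact mul_le_mul_of_nonneg_right (hC _) (norm_nonneg _)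
  set Φ : EuclideanSpace ℝ (Fin n) × EuclideanSpace ℝ (Fin n) → EuclideanSpace ℝ (Fin n) → ℂ :=
    fun p => auxH f T (p.1 + p.2) ⋆[ContinuousLinearMap.mul ℂ ℂ, volume] auxG f T p.2 with hΦ
  have hGs : ∀ b, HasCompactSupport (auxG f T b) := fun b => aux_cs (auxG_zero T b)
  have hΦn : ∀ p, eLpNorm (Φ p) 2 volume ≤ e * (ENNReal.ofReal C * N) := by
    intro p
    have := aux_conv (auxG_cont hc T p.2) (hGs p.2) (hHc (p.1 + p.2)) (hHs _) (hsup p.2)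
    refine this.trans ?_
    rw [ENNReal.ofReal_coe_nnreal]
    gcongr
    exact hHn _
  have hΦc : ∀ p, Continuous (Φ p) := fun p =>
    (hGs p.2).continuous_convolution_right _ ((hHc _).locallyIntegrable) (auxG_cont hc T p.2)
  have hlow : ∀ u ∈ B, κ ≤ ∑ p ∈ P, ‖Φ p u‖ := by
    intro u hu
    obtain ⟨c, hcR, hcu⟩ := hR (T • u)
    refine (aux_lower hc hC S hη.le hS hε₁' u c hu hcu).trans ?_
    rw [hP, Finset.sum_product]
    exact Finset.single_le_sum (f := fun c => ∑ b ∈ S, ‖Φ (c, b) u‖)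
      (fun c _ => Finset.sum_nonneg fun b _ => norm_nonneg _) hcR
  have h1 : L ≤ eLpNorm (∑ p ∈ P, fun u => ‖Φ p u‖) 2 (volume.restrict B) := by
    refine eLpNorm_mono_ae ?_
    filter_upwards [ae_restrict_mem measurableSet_closedBall] with u hu
    rw [Real.norm_of_nonneg hκ.le, Finset.sum_apply]
    exact (hlow u hu).trans (le_abs_self _)
  have h2 : eLpNorm (∑ p ∈ P, fun u => ‖Φ p u‖) 2 (volume.restrict B) ≤
      ∑ p ∈ P, eLpNorm (fun u => ‖Φ p u‖) 2 (volume.restrict B) :=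
    eLpNorm_sum_le (fun p _ => (hΦc p).norm.aestronglyMeasurable) (by norm_num)
  have h3 : ∑ p ∈ P, eLpNorm (fun u => ‖Φ p u‖) 2 (volume.restrict B) ≤
      ∑ p ∈ P, e * (ENNReal.ofReal C * N) := by
    refine Finset.sum_le_sum fun p _ => ?_
    rw [eLpNorm_norm]
    exact (eLpNorm_mono_measure _ Measure.restrict_le_self).trans (hΦn p)
  have h4 := h1.trans (h2.trans h3)
  rw [Finset.sum_const, nsmul_eq_mul] at h4
  refine absurd h4 (not_le.2 ?_)
  convert heL using 1
  ring

end Final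

/-- If `F : ℝⁿ → X` is Bohr almost periodic and, for every vector `a ∈ ℝⁿ`
all of whose coordinates are nonzero, the Cesàro means `(1/k)·Σ_{j<k} F(t + j•a)` converge
to `0` uniformly in `t` as `k → ∞`, then `F ≡ 0`. -/
theorem besicovitch_stmt0 {n : ℕ} {X : Type*}
    [NormedAddCommGroup X] [NormedSpace ℂ X] [CompleteSpace X]
    (F : EuclideanSpace ℝ (Fin n) → X)
    (hFcont : Continuous F)
    (hFap : ∀ ε : ℝ, 0 < ε → ∃ l : ℝ, 0 < l ∧ ∀ t₀ : EuclideanSpace ℝ (Fin n),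
      ∃ τ : EuclideanSpace ℝ (Fin n), ‖τ - t₀‖ ≤ l ∧
        ∀ t : EuclideanSpace ℝ (Fin n), ‖F (t + τ) - F t‖ ≤ ε)
    (hCesaro : ∀ a : EuclideanSpace ℝ (Fin n), (∀ i : Fin n, a i ≠ 0) →
      ∀ ε : ℝ, 0 < ε → ∃ K : ℕ, ∀ k : ℕ, K ≤ k →
        ∀ t : EuclideanSpace ℝ (Fin n),
          ‖(k : ℝ)⁻¹ • ∑ j ∈ Finset.range k, F (t + (j : ℝ) • a)‖ ≤ ε) :
    ∀ t : EuclideanSpace ℝ (Fin n), F t = 0 := by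
  intro t₀
  obtain ⟨φ, hφ1, hφ⟩ := exists_dual_vector'' ℂ (F t₀)
  have hφn : ∀ x, ‖φ x‖ ≤ ‖x‖ := fun x =>
    (φ.le_of_opNorm_le hφ1 x).trans (by rw [one_mul])
  have h0 : φ (F t₀) = 0 := by
    refine aux_scalar (f := fun t => φ (F t)) (by fun_prop) ?_ ?_ t₀
    · intro ε hε
      obtain ⟨l, hl, h⟩ := hFap ε hε
      refine ⟨l, hl, fun s => ?_⟩
      obtain ⟨τ, h1, h2⟩ := h s
      refine ⟨τ, h1, fun t => ?_⟩
      rw [← map_sub]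
      exact (hφn _).trans (h2 t)
    · intro a ha ε hε
      obtain ⟨K, hK⟩ := hCesaro a ha ε hε
      refine ⟨K, fun k hk t => ?_⟩
      rw [← map_sum]
      refine (hφn _).trans ?_
      rcases Nat.eq_zero_or_pos k with rfl | hk0
      · simp
      · have hk' : (0 : ℝ) < k := by exact_mod_cast hk0
        have := hK k hk t
        rw [norm_smul, norm_inv, Real.norm_of_nonneg hk'.le, inv_mul_le_iff₀ hk'] at this
        exact this
  rw [hφ] at h0
  simpa using h0
end

section
/- Let (R(t))_{t>0} ⊆ L(X,Y) be a strongly continuous operator family satisfying ‖R(t)‖_{L(X,Y)} ≤ M·t^{β−1}/(1+t^γ) for all t > 0, with constants M > 0, β ∈ (0,1] and γ > 1. Let a > 0, α > 0, p ∈ [1,∞) with αp ≥ 1 and ap ≥ 1, and assume αp(β−1)/(αp−1) > −1 in case αp > 1, and β = 1 in case αp = 1. Let f : ℝ → X be Lebesgue measurable, Stepanov-(αp)-bounded (i.e. sup_{t∈ℝ} ∫_t^{t+1} ‖f(s)‖^{αp} ds < +∞), and belong to e-(x^α, t^{−a})-B^p(ℝ : X). Then the function F(t) := ∫_{−∞}^{t}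 R(t−s) f(s) ds is well-defined, bounded, continuous, and belongs to e-(x^α, t^{−a})-B^p(ℝ : Y). -/
open MeasureTheory Filter Topology ENNReal NNReal

noncomputable section

/-- A trigonometric polynomial `P : ℝ → X`: a finite sum `P(t) = Σ_j e^{iλ_j t} c_j`. -/
def IsTrigPoly1 {X : Type*} [NormedAddCommGroup X] [NormedSpace ℂ X] (P : ℝ → X) : Prop :=
  ∃ (m : ℕ) (lam : Fin m → ℝ) (c : Fin m → X),
    ∀ t : ℝ, P t = ∑ j, Complex.exp (Complex.I * ((lam j * t : ℝ) : ℂ)) • c j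

/-- Membership in the class `e-(x^α, t^{−a})-B^p(ℝ : X)`. -/
def MemBes1 {X : Type*} [NormedAddCommGroup X] [NormedSpace ℂ X]
    (α a p : ℝ) (g : ℝ → X) : Prop :=
  ∃ P : ℕ → ℝ → X, (∀ k, IsTrigPoly1 (P k)) ∧
    Tendsto (fun k => limsup (fun t : ℝ =>
      ENNReal.ofReal (t ^ (-a)) *
        (∫⁻ s in Set.Icc (-t) t, ENNReal.ofReal (‖g s - P k s‖ ^ (α * p))) ^ (1 / p))
      atTop) atTop (𝓝 (0 : ℝ≥0∞))

lemma bs_ind_meas {Y : Type*} [NormedAddCommGroup Y] (h : ℝ → Y)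
    (hc : ContinuousOn h (Set.Ioi 0)) : StronglyMeasurable ((Set.Ioi (0:ℝ)).indicator h) := by
  have h1 : ∀ n : ℕ, StronglyMeasurable
      ((Set.Ioi (0:ℝ)).indicator (fun r => h (max r (1 / ((n : ℝ) + 1))))) := by
    intro n
    have hcn : Continuous (fun r : ℝ => h (max r (1 / ((n : ℝ) + 1)))) := by
      refine hc.comp_continuous (by fun_prop) fun r => ?_
      exact Set.mem_Ioi.2 (lt_max_of_lt_right (by positivity))
    exact hcn.stronglyMeasurable.indicator measurableSet_Ioi
  refine stronglyMeasurable_of_tendsto atTop h1 ?_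
  rw [tendsto_pi_nhds]
  intro r
  refine tendsto_const_nhds.congr' ?_
  by_cases hr : r ∈ Set.Ioi (0:ℝ)
  · have := (tendsto_one_div_add_atTop_nhds_zero_nat (𝕜 := ℝ)).eventually_lt_const
      (Set.mem_Ioi.1 hr)
    filter_upwards [this] with n hn
    rw [Set.indicator_of_mem hr, Set.indicator_of_mem hr, max_eq_left hn.le]
  · refine Eventually.of_forall fun n => ?_
    simp only [Set.indicator_of_notMem hr]

lemma bs_meas {X Y : Type*}
    [NormedAddCommGroup X] [NormedSpace ℂ X] [NormedAddCommGroup Y] [NormedSpace ℂ Y]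
    (R : ℝ → X →L[ℂ] Y) (hR : ∀ x, StronglyMeasurable (fun r => R r x))
    (h : ℝ → X) (hh : StronglyMeasurable h) : StronglyMeasurable (fun r => R r (h r)) := by
  have key : ∀ g : SimpleFunc ℝ X, StronglyMeasurable (fun r => R r (g r)) := by
    intro g
    induction g using SimpleFunc.induction with
    | @const c s hs =>
      have : (fun r => R r (((SimpleFunc.piecewise s hs (SimpleFunc.const ℝ c)
          (SimpleFunc.const ℝ 0) : SimpleFunc ℝ X)) r)) = s.indicator (fun r => R r c) := by
        ext r
        by_cases hr : r ∈ s <;> simp [hr, SimpleFunc.coe_piecewise]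
      rw [this]
      exact (hR c).indicator hs
    | @add f g _ hf hg =>
      have h := hf.add hg
      have e : (fun r => R r ((f + g) r)) = (fun r => R r (f r)) + fun r => R r (g r) := by
        ext r; simp
      rw [e]; exact h
  refine stronglyMeasurable_of_tendsto atTop (fun n => key (hh.approx n)) ?_
  rw [tendsto_pi_nhds]
  intro r
  exact ((R r).continuous.tendsto _).comp (hh.tendsto_approx r)

/-- the weight -/
def bsw (γ r : ℝ) : ℝ≥0∞ := ENNReal.ofReal ((1 + |r|) ^ (-γ))

lemma bsw_meas (γ : ℝ) : Measurable (bsw γ) := by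
  unfold bsw
  fun_prop

lemma bsw_int (γ : ℝ) (hγ : 1 < γ) : ∫⁻ r, bsw γ r < ⊤ := by
  have h : Integrable (fun x : ℝ => (1 + ‖x‖) ^ (-γ)) :=
    integrable_one_add_norm (by simpa using hγ)
  have h2 := h.lintegral_lt_top
  simpa [bsw] using h2

lemma bsw_ne_top (γ r : ℝ) : bsw γ r ≠ ⊤ := ENNReal.ofReal_ne_top

lemma bsw_neg (γ r : ℝ) : bsw γ (-r) = bsw γ r := by simp [bsw]

/-- general comparison -/
lemma bsw_cmp (γ : ℝ) (hγ : 0 ≤ γ) (c u v : ℝ) (hc : 0 < c) (h : 1 + |v| ≤ c * (1 + |u|)) :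
    bsw γ u ≤ ENNReal.ofReal (c ^ γ) * bsw γ v := by
  unfold bsw
  rw [← ENNReal.ofReal_mul (by positivity)]
  apply ENNReal.ofReal_le_ofReal
  have hu : 0 < 1 + |u| := by positivity
  have hv : 0 < 1 + |v| := by positivity
  have h1 : (1 + |v|) ^ γ ≤ c ^ γ * (1 + |u|) ^ γ := by
    rw [← Real.mul_rpow hc.le hu.le]
    exact Real.rpow_le_rpow hv.le h hγ
  rw [Real.rpow_neg hu.le, Real.rpow_neg hv.le]
  have a1 : 0 < (1 + |u|) ^ γ := by positivity
  have a2 : 0 < (1 + |v|) ^ γ := by positivity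
  rw [← div_eq_mul_inv, inv_le_comm₀ a1 (by positivity), inv_div, div_le_iff₀ (by positivity)]
  linarith

lemma bsw_peetre (γ : ℝ) (hγ : 0 ≤ γ) (t s : ℝ) :
    bsw γ (t - s) ≤ ENNReal.ofReal ((1 + |t|) ^ γ) * bsw γ s := by
  apply bsw_cmp γ hγ _ _ _ (by positivity)
  have : |s| ≤ |t| + |t - s| := by
    have := abs_sub t (t - s)
    simpa using this
  nlinarith [abs_nonneg t, abs_nonneg (t - s)]

lemma bs_stepanov (γ : ℝ) (hγ : 0 ≤ γ) (g : ℝ → ℝ≥0∞) (hg : Measurable g) (C : ℝ≥0∞)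
    (hC : ∀ t : ℝ, ∫⁻ s in Set.Icc t (t + 1), g s ≤ C) (t : ℝ) :
    ∫⁻ r, bsw γ r * g (t - r) ≤ ENNReal.ofReal (2 ^ γ) * C * ∫⁻ r, bsw γ r := by
  have hw := bsw_meas γ
  have e1 : ∫⁻ r, bsw γ r * g (t - r) = ∫⁻ s, bsw γ (t - s) * g s := by
    rw [← lintegral_sub_left_eq_self (fun r => bsw γ r * g (t - r)) t]
    simp
  have hm : MeasurableSet {x : ℝ × ℝ | x.2 ∈ Set.Icc (x.1 - 1) x.1} := by
    have : {x : ℝ × ℝ | x.2 ∈ Set.Icc (x.1 - 1) x.1}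
      = {x : ℝ × ℝ | x.1 - 1 ≤ x.2} ∩ {x | x.2 ≤ x.1} := by ext; simp
    rw [this]
    exact (measurableSet_le (by fun_prop) (by fun_prop)).inter
      (measurableSet_le (by fun_prop) (by fun_prop))
  let I : ℝ → ℝ → ℝ≥0∞ := fun s u =>
    {x : ℝ × ℝ | x.2 ∈ Set.Icc (x.1 - 1) x.1}.indicator (fun _ => 1) (s, u)
  have hI : Measurable (fun x : ℝ × ℝ => I x.1 x.2) :=
    (measurable_const.indicator hm : Measurable _)
  have hI1 : ∀ s, ∫⁻ u, I s u = 1 := by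
    intro s
    have : (fun u => I s u) = (Set.Icc (s - 1) s).indicator (fun _ => 1) := by
      ext u; simp [I, Set.indicator]
    rw [this, lintegral_indicator measurableSet_Icc]
    simp
  have hI2 : ∀ u, ∫⁻ s, I s u * g s ≤ C := by
    intro u
    refine le_trans (le_of_eq ?_) (hC u)
    rw [← lintegral_indicator measurableSet_Icc]
    congr 1
    ext s
    by_cases h : s ∈ Set.Icc u (u + 1)
    · have h' : s - 1 ≤ u ∧ u ≤ s := ⟨by linarith [h.2], h.1⟩
      simp only [I, Set.indicator_of_mem h]
      rw [Set.indicator_of_mem]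
      · simp
      · simpa using h'
    · simp only [I, Set.indicator_of_notMem h]
      rw [Set.indicator_of_notMem]
      · simp
      · simp only [Set.mem_ofPred_eq, Set.mem_Icc] at h ⊢
        intro h'
        exact h ⟨h'.2, by linarith [h'.1]⟩
  have hcmp : ∀ s u, I s u * (bsw γ (t - s) * g s)
      ≤ (ENNReal.ofReal (2 ^ γ) * bsw γ (t - u)) * (I s u * g s) := by
    intro s u
    by_cases h : u ∈ Set.Icc (s - 1) s
    · have : bsw γ (t - s) ≤ ENNReal.ofReal (2 ^ γ) * bsw γ (t - u) := by
        apply bsw_cmp γ hγ _ _ _ (by norm_num)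
        have h1 : |t - u| ≤ |t - s| + |s - u| := abs_sub_le _ _ _
        have h2 : |s - u| ≤ 1 := by
          rw [abs_le]; constructor <;> linarith [h.1, h.2]
        linarith [abs_nonneg (t - s)]
      calc _ ≤ I s u * ((ENNReal.ofReal (2 ^ γ) * bsw γ (t - u)) * g s) := by gcongr
        _ = _ := by ring
    · have : I s u = 0 := by
        simp only [I]
        exact Set.indicator_of_notMem (by simpa using h) _
      simp [this]
  rw [e1]
  calc ∫⁻ s, bsw γ (t - s) * g s
      = ∫⁻ s, ∫⁻ u, I s u * (bsw γ (t - s) * g s) := by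
        congr 1; ext s
        rw [lintegral_mul_const _ (by exact hI.comp (measurable_const.prodMk measurable_id)), hI1, one_mul]
    _ ≤ ∫⁻ s, ∫⁻ u, (ENNReal.ofReal (2 ^ γ) * bsw γ (t - u)) * (I s u * g s) :=
        lintegral_mono fun s => lintegral_mono fun u => hcmp s u
    _ = ∫⁻ u, ∫⁻ s, (ENNReal.ofReal (2 ^ γ) * bsw γ (t - u)) * (I s u * g s) := by
        apply lintegral_lintegral_swap
        apply Measurable.aemeasurable
        have h1 : Measurable (fun x : ℝ × ℝ => bsw γ (t - x.2)) := hw.comp (by fun_prop)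
        have h2 : Measurable (fun x : ℝ × ℝ => g x.1) := hg.comp (by fun_prop)
        exact (h1.const_mul _).mul (hI.mul h2)
    _ = ∫⁻ u, (ENNReal.ofReal (2 ^ γ) * bsw γ (t - u)) * ∫⁻ s, (I s u * g s) := by
        congr 1; ext u
        rw [lintegral_const_mul]
        exact (hI.comp (measurable_id.prodMk measurable_const)).mul hg
    _ ≤ ∫⁻ u, (ENNReal.ofReal (2 ^ γ) * bsw γ (t - u)) * C := by
        gcongr with u
        exact hI2 u
    _ = _ := by
        have h1 : Measurable (fun u : ℝ => bsw γ (t - u)) := hw.comp (by fun_prop)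
        rw [lintegral_mul_const _ (h1.const_mul _), lintegral_const_mul _ h1,
          lintegral_sub_left_eq_self (fun r => bsw γ r) t]
        ring

/-- Kernel inequality. -/
lemma bs_kernel (M β γ q : ℝ) (hM : 0 < M) (hβ : β ∈ Set.Ioc (0 : ℝ) 1) (hγ : 1 < γ)
    (hq : 1 ≤ q)
    (hcase1 : 1 < q → -1 < q * (β - 1) / (q - 1))
    (hcase2 : q = 1 → β = 1) :
    ∃ A : ℝ≥0∞, A ≠ ⊤ ∧ ∀ h : ℝ → ℝ≥0∞, Measurable h →
      (∫⁻ r, (Set.Ioi (0:ℝ)).indicator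
        (fun r => ENNReal.ofReal (M * r ^ (β - 1) / (1 + r ^ γ))) r * h r) ^ q
      ≤ A * ∫⁻ r, bsw γ r * h r ^ q := by
  have hw := bsw_meas γ
  let κ : ℝ → ℝ≥0∞ := (Set.Ioi (0:ℝ)).indicator (fun r => ENNReal.ofReal (r ^ (β - 1)))
  have hκ : Measurable κ := by
    apply Measurable.indicator _ measurableSet_Ioi
    fun_prop
  set D : ℝ≥0∞ := ENNReal.ofReal (M * 2 ^ γ) with hD
  have hk : ∀ r, (Set.Ioi (0:ℝ)).indicator
        (fun r => ENNReal.ofReal (M * r ^ (β - 1) / (1 + r ^ γ))) r ≤ D * (κ r * bsw γ r) := by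
    intro r
    by_cases hr : r ∈ Set.Ioi (0:ℝ)
    · have hr0 : 0 < r := hr
      simp only [κ, Set.indicator_of_mem hr, bsw, hD]
      rw [← ENNReal.ofReal_mul (by positivity), ← ENNReal.ofReal_mul (by positivity)]
      apply ENNReal.ofReal_le_ofReal
      rw [abs_of_pos hr0, Real.rpow_neg (by positivity)]
      have h1 : (1 + r) ^ γ ≤ 2 ^ γ * (1 + r ^ γ) := by
        rcases le_total r 1 with h | h
        · calc (1 + r) ^ γ ≤ 2 ^ γ := Real.rpow_le_rpow (by positivity) (by linarith) (by linarith)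
            _ ≤ _ := le_mul_of_one_le_right (by positivity) (by
              have : 0 ≤ r ^ γ := by positivity
              linarith)
        · calc (1 + r) ^ γ ≤ (2 * r) ^ γ :=
              Real.rpow_le_rpow (by positivity) (by linarith) (by linarith)
            _ = 2 ^ γ * r ^ γ := Real.mul_rpow (by norm_num) hr0.le
            _ ≤ _ := by gcongr; linarith
      have h2 : 0 < (1 + r) ^ γ := by positivity
      have h3 : 0 < 1 + r ^ γ := by positivity
      have h4 : (1 + r ^ γ)⁻¹ ≤ 2 ^ γ * ((1 + r) ^ γ)⁻¹ := by
        rw [← div_eq_mul_inv, inv_eq_one_div, div_le_div_iff₀ h3 h2]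
        linarith
      calc M * r ^ (β - 1) / (1 + r ^ γ) = M * r ^ (β - 1) * (1 + r ^ γ)⁻¹ := by
            rw [div_eq_mul_inv]
        _ ≤ M * r ^ (β - 1) * (2 ^ γ * ((1 + r) ^ γ)⁻¹) := by gcongr
        _ = _ := by ring
    · simp [Set.indicator_of_notMem hr]
  have hκ1 : ∀ r, ¬ (r ∈ Set.Ioo (0:ℝ) 1) → κ r ≤ 1 := by
    intro r hr
    by_cases h0 : r ∈ Set.Ioi (0:ℝ)
    · simp only [κ, Set.indicator_of_mem h0]
      have : 1 ≤ r := by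
        by_contra h; exact hr ⟨h0, not_le.1 h⟩
      rw [ENNReal.ofReal_le_one]
      exact Real.rpow_le_one_of_one_le_of_nonpos this (by linarith [hβ.2])
    · simp [κ, Set.indicator_of_notMem h0]
  have hmain : ∃ B : ℝ≥0∞, B ≠ ⊤ ∧ ∀ h : ℝ → ℝ≥0∞, Measurable h →
      (∫⁻ r, κ r * bsw γ r * h r) ^ q ≤ B * ∫⁻ r, bsw γ r * h r ^ q := by
    rcases hq.eq_or_lt with hq1 | hq1
    · refine ⟨1, by simp, fun h hh => ?_⟩
      have hb := hcase2 hq1.symm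
      subst hq1
      simp only [ENNReal.rpow_one, one_mul]
      apply lintegral_mono
      intro r
      have : κ r ≤ 1 := by
        by_cases h0 : r ∈ Set.Ioi (0:ℝ)
        · simp [κ, Set.indicator_of_mem h0, hb]
        · simp [κ, Set.indicator_of_notMem h0]
      calc κ r * bsw γ r * h r ≤ 1 * bsw γ r * h r := by gcongr
        _ = _ := by rw [one_mul]
    · set q' := Real.conjExponent q with hq'
      have hpq : q.HolderConjugate q' := Real.HolderConjugate.conjExponent hq1
      have hq'pos : 0 < q' := hpq.symm.pos
      let μ : Measure ℝ := volume.withDensity (bsw γ)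
      have hfin : ∫⁻ r, κ r ^ q' ∂μ < ⊤ := by
        rw [lintegral_withDensity_eq_lintegral_mul _ hw (hκ.pow_const _)]
        have hle : ∀ r, (bsw γ * fun r => κ r ^ q') r ≤
            (Set.Ioo (0:ℝ) 1).indicator (fun r => ENNReal.ofReal (r ^ ((β - 1) * q'))) r
              + bsw γ r := by
          intro r
          simp only [Pi.mul_apply]
          by_cases hr : r ∈ Set.Ioo (0:ℝ) 1
          · have h0 : r ∈ Set.Ioi (0:ℝ) := hr.1
            have hr0 : 0 < r := h0
            rw [Set.indicator_of_mem hr]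
            simp only [κ, Set.indicator_of_mem h0]
            rw [ENNReal.ofReal_rpow_of_nonneg (by positivity) hq'pos.le,
              ← Real.rpow_mul hr0.le]
            have : bsw γ r ≤ 1 := by
              unfold bsw
              rw [ENNReal.ofReal_le_one]
              exact Real.rpow_le_one_of_one_le_of_nonpos (by simp) (by linarith)
            calc _ ≤ 1 * ENNReal.ofReal (r ^ ((β - 1) * q')) := by gcongr
              _ ≤ _ := by rw [one_mul]; exact le_self_add
          · rw [Set.indicator_of_notMem hr, zero_add]
            have : κ r ^ q' ≤ 1 := ENNReal.rpow_le_one (hκ1 r hr) hq'pos.le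
            calc _ ≤ bsw γ r * 1 := by gcongr
              _ = _ := mul_one _
        refine lt_of_le_of_lt (lintegral_mono hle) ?_
        rw [lintegral_add_right _ hw, lintegral_indicator measurableSet_Ioo]
        refine ENNReal.add_lt_top.2 ⟨?_, bsw_int γ hγ⟩
        have hexp : -1 < (β - 1) * q' := by
          have := hcase1 hq1
          rw [hq', Real.conjExponent]
          convert this using 1
          ring
        have hi := (intervalIntegral.intervalIntegrable_rpow' (a := 0) (b := 1) hexp)
        rw [intervalIntegrable_iff_integrableOn_Ioo_of_le zero_le_one] at hi
        exact hi.lintegral_lt_top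
      refine ⟨(∫⁻ r, κ r ^ q' ∂μ) ^ (q / q'), ?_, fun h hh => ?_⟩
      · exact ENNReal.rpow_ne_top_of_nonneg (div_nonneg hpq.pos.le hq'pos.le) hfin.ne
      · have H := ENNReal.lintegral_mul_le_Lp_mul_Lq μ hpq.symm hκ.aemeasurable hh.aemeasurable
        have e1 : ∫⁻ r, (κ * h) r ∂μ = ∫⁻ r, κ r * bsw γ r * h r := by
          rw [lintegral_withDensity_eq_lintegral_mul _ hw (hκ.mul hh)]
          congr 1; ext r; simp only [Pi.mul_apply]; ring
        have e2 : ∫⁻ r, h r ^ q ∂μ = ∫⁻ r, bsw γ r * h r ^ q := by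
          rw [lintegral_withDensity_eq_lintegral_mul _ hw (hh.pow_const _)]
          rfl
        rw [e1, e2] at H
        have H2 := ENNReal.rpow_le_rpow H hpq.pos.le
        rw [ENNReal.mul_rpow_of_nonneg _ _ hpq.pos.le, ← ENNReal.rpow_mul, ← ENNReal.rpow_mul,
          one_div_mul_cancel hpq.pos.ne', ENNReal.rpow_one] at H2
        refine H2.trans (le_of_eq ?_)
        congr 2
        ring
  obtain ⟨B, hB, hBm⟩ := hmain
  refine ⟨D ^ q * B, ENNReal.mul_ne_top (ENNReal.rpow_ne_top_of_nonneg (by linarith)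
    ENNReal.ofReal_ne_top) hB, fun h hh => ?_⟩
  have step : (∫⁻ r, (Set.Ioi (0:ℝ)).indicator
        (fun r => ENNReal.ofReal (M * r ^ (β - 1) / (1 + r ^ γ))) r * h r)
      ≤ D * ∫⁻ r, κ r * bsw γ r * h r := by
    have hm3 : Measurable (fun r => κ r * bsw γ r * h r) := (hκ.mul hw).mul hh
    rw [← lintegral_const_mul _ hm3]
    apply lintegral_mono
    intro r
    calc _ ≤ D * (κ r * bsw γ r) * h r := mul_le_mul_left (hk r) _
      _ = _ := by ring
  calc _ ≤ (D * ∫⁻ r, κ r * bsw γ r * h r) ^ q := ENNReal.rpow_le_rpow step (by linarith)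
    _ = D ^ q * (∫⁻ r, κ r * bsw γ r * h r) ^ q := ENNReal.mul_rpow_of_nonneg _ _ (by linarith)
    _ ≤ D ^ q * (B * ∫⁻ r, bsw γ r * h r ^ q) := by gcongr; exact hBm h hh
    _ = _ := by ring

lemma bs_bes (γ : ℝ) (hγ : 0 ≤ γ) (g : ℝ → ℝ≥0∞) (hg : Measurable g) (T : ℝ) :
    ∫⁻ t in Set.Icc (-T) T, ∫⁻ r, bsw γ r * g (t - r) ≤
      (∫⁻ r, bsw γ r) * (∫⁻ s in Set.Icc (-(2 * T)) (2 * T), g s) +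
      ENNReal.ofReal (2 * T) * (ENNReal.ofReal (2 ^ γ) *
        ∫⁻ s in (Set.Icc (-(2 * T)) (2 * T))ᶜ, bsw γ s * g s) := by
  have hw := bsw_meas γ
  have e1 : ∀ t, ∫⁻ r, bsw γ r * g (t - r) = ∫⁻ s, bsw γ (t - s) * g s := by
    intro t
    rw [← lintegral_sub_left_eq_self (fun r => bsw γ r * g (t - r)) t]
    simp
  simp_rw [e1]
  have hw2 : Measurable (fun x : ℝ × ℝ => bsw γ (x.1 - x.2)) := hw.comp (by fun_prop)
  have hg2 : Measurable (fun x : ℝ × ℝ => g x.2) := hg.comp (by fun_prop)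
  rw [lintegral_lintegral_swap (hw2.mul hg2).aemeasurable]
  have e2 : ∀ s, ∫⁻ t in Set.Icc (-T) T, bsw γ (t - s) * g s
      = (∫⁻ t in Set.Icc (-T) T, bsw γ (t - s)) * g s := by
    intro s
    have hm : Measurable (fun t => bsw γ (t - s)) := hw.comp (by fun_prop)
    rw [lintegral_mul_const _ hm]
  simp_rw [e2]
  rw [← lintegral_add_compl _ (measurableSet_Icc (a := -(2 * T)) (b := 2 * T))]
  refine add_le_add ?_ ?_
  · rw [← lintegral_const_mul _ hg]
    refine lintegral_mono fun s => ?_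
    refine mul_le_mul_left ?_ _
    calc _ ≤ ∫⁻ t, bsw γ (t - s) := setLIntegral_le_lintegral _ _
      _ = _ := lintegral_sub_right_eq_self (fun r => bsw γ r) s
  · have hm : Measurable (fun s => bsw γ s * g s) := hw.mul hg
    rw [← lintegral_const_mul _ hm, ← lintegral_const_mul _ (hm.const_mul _)]
    refine setLIntegral_mono' measurableSet_Icc.compl fun s hs => ?_
    have : ∫⁻ t in Set.Icc (-T) T, bsw γ (t - s) ≤
        ∫⁻ t in Set.Icc (-T) T, ENNReal.ofReal (2 ^ γ) * bsw γ s := by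
      refine setLIntegral_mono' measurableSet_Icc fun t ht => ?_
      apply bsw_cmp γ hγ _ _ _ (by norm_num)
      have h1 : 2 * T ≤ |s| := by
        by_contra hlt
        push Not at hlt
        exact hs (abs_le.1 hlt.le)
      have h2 : |t| ≤ T := abs_le.2 ht
      have h3 : |s| ≤ |t| + |t - s| := by
        have := abs_sub t (t - s)
        simpa using this
      linarith
    calc _ ≤ (∫⁻ t in Set.Icc (-T) T, ENNReal.ofReal (2 ^ γ) * bsw γ s) * g s := by gcongr
      _ = _ := by
        rw [setLIntegral_const, Real.volume_Icc, sub_neg_eq_add, ← two_mul]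
        ring

section
variable {X Y : Type*} [NormedAddCommGroup X] [NormedSpace ℂ X]
    [NormedAddCommGroup Y] [NormedSpace ℂ Y]

lemma bs_bound (γ q : ℝ) (hq : 1 ≤ q) (R : ℝ → X →L[ℂ] Y) (k : ℝ → ℝ≥0∞)
    (hk : ∀ r, ‖R r‖ₑ ≤ k r) (A : ℝ≥0∞)
    (H : ∀ h : ℝ → ℝ≥0∞, Measurable h →
      (∫⁻ r, k r * h r) ^ q ≤ A * ∫⁻ r, bsw γ r * h r ^ q)
    (h : ℝ → X) (hh : StronglyMeasurable h) :
    (∫⁻ r, ‖R r (h r)‖ₑ) ^ q ≤ A * ∫⁻ r, bsw γ r * ‖h r‖ₑ ^ q := by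
  refine le_trans (ENNReal.rpow_le_rpow (lintegral_mono fun r => ?_) (by linarith))
    (H _ hh.enorm)
  calc ‖R r (h r)‖ₑ ≤ ‖R r‖ₑ * ‖h r‖ₑ := (R r).le_opENorm _
    _ ≤ _ := by gcongr; exact hk r

lemma bs_integrable (γ q : ℝ) (hq : 1 ≤ q) (R : ℝ → X →L[ℂ] Y)
    (hR : ∀ x, StronglyMeasurable (fun r => R r x)) (k : ℝ → ℝ≥0∞)
    (hk : ∀ r, ‖R r‖ₑ ≤ k r) (A : ℝ≥0∞) (hA : A ≠ ⊤)
    (H : ∀ h : ℝ → ℝ≥0∞, Measurable h →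
      (∫⁻ r, k r * h r) ^ q ≤ A * ∫⁻ r, bsw γ r * h r ^ q)
    (h : ℝ → X) (hh : StronglyMeasurable h) (hfin : ∫⁻ r, bsw γ r * ‖h r‖ₑ ^ q ≠ ⊤) :
    Integrable (fun r => R r (h r)) := by
  refine ⟨(bs_meas R hR h hh).aestronglyMeasurable, ?_⟩
  have := bs_bound γ q hq R k hk A H h hh
  rw [hasFiniteIntegral_iff_enorm]
  by_contra hc
  rw [not_lt, top_le_iff] at hc
  rw [hc, ENNReal.top_rpow_of_pos (by linarith), top_le_iff] at this
  exact ENNReal.mul_ne_top hA hfin this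

lemma bs_norm (γ q : ℝ) (hq : 1 ≤ q) (R : ℝ → X →L[ℂ] Y) (k : ℝ → ℝ≥0∞)
    (hk : ∀ r, ‖R r‖ₑ ≤ k r) (A : ℝ≥0∞)
    (H : ∀ h : ℝ → ℝ≥0∞, Measurable h →
      (∫⁻ r, k r * h r) ^ q ≤ A * ∫⁻ r, bsw γ r * h r ^ q)
    (h : ℝ → X) (hh : StronglyMeasurable h) :
    ‖∫ r, R r (h r)‖ₑ ^ q ≤ A * ∫⁻ r, bsw γ r * ‖h r‖ₑ ^ q :=
  (ENNReal.rpow_le_rpow (enorm_integral_le_lintegral_enorm _) (by linarith)).trans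
    (bs_bound γ q hq R k hk A H h hh)

lemma bs_bdd_fin (γ q : ℝ) (hγ : 1 < γ) (hq : 1 ≤ q) (h : ℝ → X) (C : ℝ) (hC : ∀ r, ‖h r‖ ≤ C) :
    ∫⁻ r, bsw γ r * ‖h r‖ₑ ^ q ≠ ⊤ := by
  refine ne_top_of_le_ne_top (b := (∫⁻ r, bsw γ r) * (ENNReal.ofReal C) ^ q) ?_ ?_
  · exact ENNReal.mul_ne_top (bsw_int γ hγ).ne
      (ENNReal.rpow_ne_top_of_nonneg (by linarith) ENNReal.ofReal_ne_top)
  · rw [← lintegral_mul_const _ (bsw_meas γ)]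
    refine lintegral_mono fun r => ?_
    have : ‖h r‖ₑ ≤ ENNReal.ofReal C := by
      rw [← ofReal_norm]; exact ENNReal.ofReal_le_ofReal (hC r)
    gcongr

lemma bs_cont_bdd (γ q : ℝ) (hγ : 1 < γ) (hq : 1 ≤ q) (R : ℝ → X →L[ℂ] Y)
    (hR : ∀ x, StronglyMeasurable (fun r => R r x)) (k : ℝ → ℝ≥0∞)
    (hkm : Measurable k) (hkt : ∀ r, k r ≠ ⊤)
    (hk : ∀ r, ‖R r‖ₑ ≤ k r) (A : ℝ≥0∞) (hA : A ≠ ⊤)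
    (H : ∀ h : ℝ → ℝ≥0∞, Measurable h →
      (∫⁻ r, k r * h r) ^ q ≤ A * ∫⁻ r, bsw γ r * h r ^ q)
    (g : ℝ → X) (hg : Continuous g) (C : ℝ) (hC : ∀ r, ‖g r‖ ≤ C) :
    Continuous (fun t => ∫ r, R r (g (t - r))) := by
  have hki : Integrable (fun r => (k r).toReal) := by
    apply integrable_toReal_of_lintegral_ne_top hkm.aemeasurable
    have := H (fun _ => 1) measurable_const
    simp only [mul_one, ENNReal.one_rpow] at this
    intro hc
    rw [hc, ENNReal.top_rpow_of_pos (by linarith), top_le_iff] at this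
    exact ENNReal.mul_ne_top hA (bsw_int γ hγ).ne this
  refine continuous_of_dominated (bound := fun r => (k r).toReal * C) ?_ ?_ (hki.mul_const C) ?_
  · intro t
    exact (bs_meas R hR _ (by
      have : Continuous (fun r => g (t - r)) := by fun_prop
      exact this.stronglyMeasurable)).aestronglyMeasurable
  · intro t
    refine Eventually.of_forall fun r => ?_
    have : ‖R r‖ ≤ (k r).toReal := by
      rw [← toReal_enorm]
      exact ENNReal.toReal_mono (hkt r) (hk r)
    exact ((R r).le_opNorm _).trans (mul_le_mul this (hC _) (norm_nonneg _) ENNReal.toReal_nonneg)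
  · refine Eventually.of_forall fun r => ?_
    exact (R r).continuous.comp (by fun_prop)

lemma bs_cont (γ q : ℝ) (hγ : 1 < γ) (hq : 1 ≤ q) (R : ℝ → X →L[ℂ] Y)
    (hR : ∀ x, StronglyMeasurable (fun r => R r x)) (k : ℝ → ℝ≥0∞)
    (hkm : Measurable k) (hkt : ∀ r, k r ≠ ⊤)
    (hk : ∀ r, ‖R r‖ₑ ≤ k r) (A : ℝ≥0∞) (hA : A ≠ ⊤)
    (H : ∀ h : ℝ → ℝ≥0∞, Measurable h →
      (∫⁻ r, k r * h r) ^ q ≤ A * ∫⁻ r, bsw γ r * h r ^ q)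
    (f : ℝ → X) (hf : StronglyMeasurable f)
    (hfin : ∀ t, ∫⁻ r, bsw γ r * ‖f (t - r)‖ₑ ^ q ≠ ⊤) :
    Continuous (fun t => ∫ r, R r (f (t - r))) := by
  have hw := bsw_meas γ
  have hq0 : 0 < q := by linarith
  let ν : Measure ℝ := volume.withDensity (bsw γ)
  have : IsFiniteMeasure ν := isFiniteMeasure_withDensity (bsw_int γ hγ).ne
  have hqr : (ENNReal.ofReal q).toReal = q := ENNReal.toReal_ofReal hq0.le
  have hq0' : ENNReal.ofReal q ≠ 0 := by simpa using hq0
  have eL : ∀ h : ℝ → X, StronglyMeasurable h →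
      eLpNorm h (ENNReal.ofReal q) ν ^ q = ∫⁻ s, bsw γ s * ‖h s‖ₑ ^ q := by
    intro h hh
    rw [eLpNorm_eq_lintegral_rpow_enorm_toReal hq0' ENNReal.ofReal_ne_top, hqr,
      ← ENNReal.rpow_mul, one_div_mul_cancel hq0.ne', ENNReal.rpow_one,
      lintegral_withDensity_eq_lintegral_mul _ hw (hh.enorm.pow_const _)]
    rfl
  have hf0 : ∫⁻ s, bsw γ s * ‖f s‖ₑ ^ q ≠ ⊤ := by
    have := hfin 0
    rw [← lintegral_sub_left_eq_self (fun r => bsw γ r * ‖f (0 - r)‖ₑ ^ q) 0] at this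
    simpa [bsw_neg] using this
  have hmem : MemLp f (ENNReal.ofReal q) ν := by
    refine ⟨hf.aestronglyMeasurable, ?_⟩
    by_contra hc
    rw [not_lt, top_le_iff] at hc
    have := eL f hf
    rw [hc, ENNReal.top_rpow_of_pos hq0] at this
    exact hf0 this.symm
  apply continuous_of_locally_uniform_approx_of_continuousAt
  intro x u hu
  obtain ⟨ε, hε, hεu⟩ := mem_uniformity_edist.1 hu
  set D : ℝ≥0∞ := A * ENNReal.ofReal ((1 + (|x| + 1)) ^ γ) with hD
  have hDt : D ≠ ⊤ := ENNReal.mul_ne_top hA ENNReal.ofReal_ne_top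
  obtain ⟨δ, hδ, hδε⟩ := ENNReal.exists_nnreal_pos_mul_lt
    (ENNReal.rpow_ne_top_of_nonneg (y := 1 / q) (by positivity) hDt) hε.ne'
  obtain ⟨g, hgs, hgε, hgc, hgm⟩ := hmem.exists_hasCompactSupport_eLpNorm_sub_le
    ENNReal.ofReal_ne_top (ε := (δ : ℝ≥0∞)) (by simpa using hδ.ne')
  obtain ⟨C, hC⟩ := hgs.exists_bound_of_continuous hgc
  refine ⟨Metric.ball x 1, Metric.ball_mem_nhds x one_pos, fun t => ∫ r, R r (g (t - r)),
    (bs_cont_bdd γ q hγ hq R hR k hkm hkt hk A hA H g hgc C hC).continuousAt, ?_⟩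
  intro y hy
  apply hεu
  have mf : StronglyMeasurable (fun r => f (y - r)) := hf.comp_measurable (by fun_prop)
  have mg : StronglyMeasurable (fun r => g (y - r)) := by
    have : Continuous (fun r => g (y - r)) := by fun_prop
    exact this.stronglyMeasurable
  have i1 := bs_integrable γ q hq R hR k hk A hA H _ mf (hfin y)
  have i2 := bs_integrable γ q hq R hR k hk A hA H _ mg
    (bs_bdd_fin γ q hγ hq _ C (fun r => hC _))
  rw [edist_eq_enorm_sub, ← integral_sub i1 i2]
  simp_rw [← map_sub]
  have B := bs_norm γ q hq R k hk A H _ (mf.sub mg)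
  simp only [Pi.sub_apply] at B
  have hy' : |y| ≤ |x| + 1 := by
    have h1 : |y - x| < 1 := by simpa [Real.dist_eq] using hy
    have h2 : |y| ≤ |y - x| + |x| := by simpa using abs_add_le (y - x) x
    linarith
  have B2 : ∫⁻ r, bsw γ r * ‖f (y - r) - g (y - r)‖ₑ ^ q ≤
      ENNReal.ofReal ((1 + (|x| + 1)) ^ γ) * ∫⁻ s, bsw γ s * ‖f s - g s‖ₑ ^ q := by
    have hm : Measurable (fun s => bsw γ s * ‖f s - g s‖ₑ ^ q) :=
      hw.mul ((hf.sub hgc.stronglyMeasurable).enorm.pow_const _)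
    rw [← lintegral_sub_left_eq_self (fun r => bsw γ r * ‖f (y - r) - g (y - r)‖ₑ ^ q) y,
      ← lintegral_const_mul _ hm]
    refine lintegral_mono fun s => ?_
    simp only [_root_.sub_sub_cancel]
    rw [← mul_assoc]
    gcongr
    refine (bsw_peetre γ (by linarith) y s).trans ?_
    gcongr
  have B3 : ∫⁻ s, bsw γ s * ‖f s - g s‖ₑ ^ q ≤ (δ : ℝ≥0∞) ^ q := by
    have := eL (f - g) (hf.sub hgc.stronglyMeasurable)
    simp only [Pi.sub_apply] at this
    rw [← this]
    exact ENNReal.rpow_le_rpow hgε hq0.le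
  have B4 : ‖∫ r, R r (f (y - r) - g (y - r))‖ₑ ^ q ≤ D * (δ : ℝ≥0∞) ^ q := by
    refine B.trans ?_
    rw [hD, mul_assoc]
    gcongr
    exact B2.trans (by gcongr)
  have B5 := ENNReal.rpow_le_rpow B4 (z := 1 / q) (by positivity)
  rw [ENNReal.mul_rpow_of_nonneg _ _ (by positivity), ← ENNReal.rpow_mul, ← ENNReal.rpow_mul,
    mul_one_div_cancel hq0.ne', ENNReal.rpow_one, ENNReal.rpow_one, mul_comm] at B5
  exact B5.trans_lt hδε

lemma bs_trig_cont {P : ℝ → X} (hP : IsTrigPoly1 P) : Continuous P ∧ ∃ C, ∀ t, ‖P t‖ ≤ C := by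
  obtain ⟨m, lam, c, h⟩ := hP
  have : P = fun t => ∑ j, Complex.exp (Complex.I * ((lam j * t : ℝ) : ℂ)) • c j := funext h
  refine ⟨?_, ∑ j, ‖c j‖, fun t => ?_⟩
  · rw [this]; fun_prop
  · rw [h t]
    refine (norm_sum_le _ _).trans (Finset.sum_le_sum fun j _ => ?_)
    rw [norm_smul, mul_comm Complex.I, Complex.norm_exp_ofReal_mul_I, one_mul]

lemma bs_trig (γ q : ℝ) (hγ : 1 < γ) (hq : 1 ≤ q) (R : ℝ → X →L[ℂ] Y)
    (hR : ∀ x, StronglyMeasurable (fun r => R r x)) (k : ℝ → ℝ≥0∞)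
    (hk : ∀ r, ‖R r‖ₑ ≤ k r) (A : ℝ≥0∞) (hA : A ≠ ⊤)
    (H : ∀ h : ℝ → ℝ≥0∞, Measurable h →
      (∫⁻ r, k r * h r) ^ q ≤ A * ∫⁻ r, bsw γ r * h r ^ q)
    {P : ℝ → X} (hP : IsTrigPoly1 P) : IsTrigPoly1 (fun t => ∫ r, R r (P (t - r))) := by
  obtain ⟨m, lam, c, h⟩ := hP
  refine ⟨m, lam, fun j => ∫ r, R r (Complex.exp (Complex.I * ((lam j * (-r) : ℝ) : ℂ)) • c j), ?_⟩
  intro t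
  have e : ∀ r, R r (P (t - r)) = ∑ j, Complex.exp (Complex.I * ((lam j * t : ℝ) : ℂ)) •
      R r (Complex.exp (Complex.I * ((lam j * (-r) : ℝ) : ℂ)) • c j) := by
    intro r
    rw [h, map_sum]
    refine Finset.sum_congr rfl fun j _ => ?_
    rw [← map_smul, smul_smul, ← Complex.exp_add]
    congr 3
    push_cast
    ring
  simp_rw [e]
  rw [integral_finsetSum]
  · refine Finset.sum_congr rfl fun j _ => ?_
    rw [integral_smul]
  · intro j _
    refine Integrable.smul _ (bs_integrable γ q hq R hR k hk A hA H _ ?_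
      (bs_bdd_fin γ q hγ hq _ ‖c j‖ ?_))
    · have : Continuous (fun r : ℝ => Complex.exp (Complex.I * ((lam j * (-r) : ℝ) : ℂ)) • c j) := by
        fun_prop
      exact this.stronglyMeasurable
    · intro r
      rw [norm_smul, mul_comm Complex.I, Complex.norm_exp_ofReal_mul_I, one_mul]

end

lemma bs_ls (u b v : ℝ → ℝ≥0∞) (K : ℝ≥0∞) (hKt : K ≠ ⊤)
    (hpt : ∀ᶠ t in atTop, u t ≤ K * b (2 * t) + v t) (hv : Tendsto v atTop (𝓝 0)) :
    limsup u atTop ≤ K * limsup b atTop := by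
  have hcomp : limsup (fun t => b (2 * t)) atTop ≤ limsup b atTop := by
    have : Tendsto (fun t : ℝ => 2 * t) atTop atTop := tendsto_id.const_mul_atTop (by norm_num)
    exact this.limsup_comp_le_limsup (u := b)
  refine ENNReal.le_of_forall_pos_le_add fun ε hε _ => ?_
  have hε' : ∀ᶠ t in atTop, v t ≤ ε :=
    (hv.eventually_lt_const (by simpa using hε : (0 : ℝ≥0∞) < ε)).mono fun _ h => h.le
  calc limsup u atTop ≤ limsup (fun t => K * b (2 * t) + ε) atTop := by
        refine limsup_le_limsup ?_
        filter_upwards [hpt, hε'] with t h1 h2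
        exact h1.trans (by gcongr)
    _ = limsup (fun t => K * b (2 * t)) atTop + ε := by
        exact limsup_add_const (F := atTop) _ _ (by isBoundedDefault) (by isBoundedDefault)
    _ = K * limsup (fun t => b (2 * t)) atTop + ε := by
        rw [ENNReal.limsup_const_mul_of_ne_top hKt]
    _ ≤ _ := by gcongr

lemma bs_tail (h : ℝ → ℝ≥0∞) (hmeas : Measurable h) (hfin : ∫⁻ s, h s ≠ ⊤) :
    Tendsto (fun T : ℝ => ∫⁻ s in (Set.Icc (-(2 * T)) (2 * T))ᶜ, h s) atTop (𝓝 0) := by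
  have e : (fun T : ℝ => ∫⁻ s in (Set.Icc (-(2 * T)) (2 * T))ᶜ, h s)
      = fun T => ∫⁻ s, (Set.Icc (-(2 * T)) (2 * T))ᶜ.indicator h s := by
    ext T; rw [lintegral_indicator measurableSet_Icc.compl]
  rw [e]
  have := tendsto_lintegral_filter_of_dominated_convergence (μ := volume) (l := (atTop : Filter ℝ))
    (F := fun T => (Set.Icc (-(2 * T)) (2 * T))ᶜ.indicator h)
    (f := fun _ => 0) h
    (Eventually.of_forall fun T => hmeas.indicator measurableSet_Icc.compl)
    (Eventually.of_forall fun T => Eventually.of_forall fun s => Set.indicator_le_self _ _ _)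
    hfin ?_
  · simpa using this
  · refine Eventually.of_forall fun s => ?_
    refine tendsto_const_nhds.congr' ?_
    filter_upwards [eventually_ge_atTop |s|] with T hT
    rw [Set.indicator_of_notMem]
    simp only [Set.mem_compl_iff, not_not]
    exact abs_le.1 (by linarith [abs_nonneg s])

lemma bs_pow_arith (a p : ℝ) (hp : 1 ≤ p) (hap : 1 ≤ a * p) (t : ℝ) (ht : 1 ≤ t)
    (x I1 I2 B Z : ℝ≥0∞) (h : x ≤ B * I1 + ENNReal.ofReal t * (Z * I2)) :
    ENNReal.ofReal (t ^ (-a)) * x ^ (1 / p) ≤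
      (ENNReal.ofReal (2 ^ a) * B ^ (1 / p)) *
        (ENNReal.ofReal ((2 * t) ^ (-a)) * I1 ^ (1 / p)) + (Z * I2) ^ (1 / p) := by
  have hp0 : 0 < p := by linarith
  have hp1 : 0 ≤ 1 / p := by positivity
  have hp2 : 1 / p ≤ 1 := by rw [div_le_one hp0]; exact hp
  have ht0 : 0 < t := by linarith
  have hpa : 1 / p ≤ a := by rw [div_le_iff₀ hp0]; exact hap
  generalize 1 / p = e at *
  have s2 : x ^ e ≤ B ^ e * I1 ^ e + ENNReal.ofReal (t ^ e) * (Z * I2) ^ e := by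
    refine (ENNReal.rpow_le_rpow h hp1).trans
      ((ENNReal.rpow_add_le_add_rpow _ _ hp1 hp2).trans (le_of_eq ?_))
    rw [ENNReal.mul_rpow_of_nonneg _ _ hp1, ENNReal.mul_rpow_of_nonneg (ENNReal.ofReal t) _ hp1,
      ENNReal.ofReal_rpow_of_nonneg ht0.le hp1]
  have s3 : ENNReal.ofReal (t ^ (-a)) * ENNReal.ofReal (t ^ e) ≤ 1 := by
    rw [← ENNReal.ofReal_mul (by positivity), ENNReal.ofReal_le_one, ← Real.rpow_add ht0]
    apply Real.rpow_le_one_of_one_le_of_nonpos ht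
    linarith
  have s4 : ENNReal.ofReal (t ^ (-a)) =
      ENNReal.ofReal (2 ^ a) * ENNReal.ofReal ((2 * t) ^ (-a)) := by
    rw [← ENNReal.ofReal_mul (by positivity), Real.mul_rpow (by norm_num) ht0.le, ← mul_assoc,
      ← Real.rpow_add (by norm_num)]
    simp
  generalize ENNReal.ofReal (t ^ (-a)) = ta at *
  generalize ENNReal.ofReal (t ^ e) = te at *
  generalize ENNReal.ofReal ((2 * t) ^ (-a)) = ua at *
  generalize ENNReal.ofReal (2 ^ a) = va at *
  generalize (Z * I2) ^ e = ze at *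
  generalize B ^ e = be at *
  generalize I1 ^ e = ie at *
  calc ta * x ^ e ≤ ta * (be * ie + te * ze) := by gcongr
    _ = ta * (be * ie) + (ta * te) * ze := by ring
    _ ≤ ta * (be * ie) + 1 * ze := by gcongr
    _ = _ := by rw [one_mul, s4]; ring

/-- The limsup estimate. -/
lemma bs_limsup (γ a p : ℝ) (hγ : 1 < γ) (ha : 0 < a) (hp : 1 ≤ p) (hap : 1 ≤ a * p)
    (A : ℝ≥0∞) (hA : A ≠ ⊤) (g G : ℝ → ℝ≥0∞) (hg : Measurable g)
    (hG : ∀ t, G t ≤ A * ∫⁻ r, bsw γ r * g (t - r))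
    (hfin : ∫⁻ s, bsw γ s * g s ≠ ⊤) :
    limsup (fun t : ℝ => ENNReal.ofReal (t ^ (-a)) * (∫⁻ s in Set.Icc (-t) t, G s) ^ (1 / p)) atTop
    ≤ (ENNReal.ofReal (2 ^ a) * (A * ∫⁻ r, bsw γ r) ^ (1 / p)) *
      limsup (fun t : ℝ => ENNReal.ofReal (t ^ (-a)) * (∫⁻ s in Set.Icc (-t) t, g s) ^ (1 / p))
        atTop := by
  have hw := bsw_meas γ
  have hp0 : 0 < p := by linarith
  have hp1 : 0 ≤ 1 / p := by positivity
  have hWt : (∫⁻ r, bsw γ r) ≠ ⊤ := (bsw_int γ hγ).ne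
  have hEt : A * (ENNReal.ofReal 2 * ENNReal.ofReal (2 ^ γ)) ≠ ⊤ := ENNReal.mul_ne_top hA
    (ENNReal.mul_ne_top ENNReal.ofReal_ne_top ENNReal.ofReal_ne_top)
  have hbes := bs_bes γ (by linarith) g hg
  have hJ0 := bs_tail _ (hw.mul hg) hfin
  simp only [Pi.mul_apply] at hJ0
  obtain ⟨J, hJ⟩ : ∃ J : ℝ → ℝ≥0∞, J = fun T : ℝ =>
    ∫⁻ s in (Set.Icc (-(2 * T)) (2 * T))ᶜ, bsw γ s * g s := ⟨_, rfl⟩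
  rw [← hJ] at hJ0
  have hbes2 : ∀ T, ∫⁻ t in Set.Icc (-T) T, ∫⁻ r, bsw γ r * g (t - r) ≤
      (∫⁻ r, bsw γ r) * (∫⁻ s in Set.Icc (-(2 * T)) (2 * T), g s) +
      ENNReal.ofReal (2 * T) * (ENNReal.ofReal (2 ^ γ) * J T) := by
    intro T; rw [hJ]; exact hbes T
  clear hbes hJ
  refine bs_ls _ _
    (fun t => (A * (ENNReal.ofReal 2 * ENNReal.ofReal (2 ^ γ)) * J t) ^ (1 / p)) _ ?_ ?_ ?_
  · exact ENNReal.mul_ne_top ENNReal.ofReal_ne_top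
      (ENNReal.rpow_ne_top_of_nonneg hp1 (ENNReal.mul_ne_top hA hWt))
  · filter_upwards [eventually_ge_atTop (1 : ℝ)] with t ht
    refine bs_pow_arith a p hp hap t ht _ _ _ _ _ ?_
    calc ∫⁻ s in Set.Icc (-t) t, G s
        ≤ ∫⁻ s in Set.Icc (-t) t, A * ∫⁻ r, bsw γ r * g (s - r) := lintegral_mono fun s => hG s
      _ = A * ∫⁻ s in Set.Icc (-t) t, ∫⁻ r, bsw γ r * g (s - r) := lintegral_const_mul' _ _ hA
      _ ≤ A * ((∫⁻ r, bsw γ r) * (∫⁻ s in Set.Icc (-(2 * t)) (2 * t), g s) +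
          ENNReal.ofReal (2 * t) * (ENNReal.ofReal (2 ^ γ) * J t)) := mul_le_mul_right (hbes2 t) _
      _ = _ := by
        rw [ENNReal.ofReal_mul (by norm_num)]
        generalize ENNReal.ofReal (2 ^ γ) = c1
        generalize ENNReal.ofReal 2 = c2
        generalize ENNReal.ofReal t = c3
        ring
  · have h1 := ENNReal.Tendsto.const_mul hJ0 (Or.inr hEt)
    have h2 := h1.ennrpow_const (1 / p)
    rw [mul_zero, ENNReal.zero_rpow_of_pos (by positivity)] at h2
    exact h2

/-- invariance of the class `e-(x^α,t^{−a})-B^p(ℝ : ·)` under the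
infinite convolution product `F(t) = ∫_{−∞}^t R(t−s) f(s) ds`, for a Stepanov
bounded inhomogeneity `f`. -/
theorem besicovitch_stmt16 {X Y : Type*}
    [NormedAddCommGroup X] [NormedSpace ℂ X] [CompleteSpace X]
    [NormedAddCommGroup Y] [NormedSpace ℂ Y] [CompleteSpace Y]
    (R : ℝ → X →L[ℂ] Y)
    (hRcont : ∀ x : X, ContinuousOn (fun t => R t x) (Set.Ioi 0))
    (M β γ : ℝ) (hM : 0 < M) (hβ : β ∈ Set.Ioc (0 : ℝ) 1) (hγ : 1 < γ)
    (hR : ∀ t : ℝ, 0 < t → ‖R t‖ ≤ M * t ^ (β - 1) / (1 + t ^ γ))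
    (a α p : ℝ) (ha : 0 < a) (hα : 0 < α) (hp : 1 ≤ p)
    (hαp : 1 ≤ α * p) (hap : 1 ≤ a * p)
    (hcase1 : 1 < α * p → -1 < α * p * (β - 1) / (α * p - 1))
    (hcase2 : α * p = 1 → β = 1)
    (f : ℝ → X) (hfmeas : StronglyMeasurable f)
    -- `f` is Stepanov-(αp)-bounded
    (hfStep : ∃ C : ℝ≥0∞, C < ⊤ ∧ ∀ t : ℝ,
      ∫⁻ s in Set.Icc t (t + 1), ENNReal.ofReal (‖f s‖ ^ (α * p)) ≤ C)
    (hf : MemBes1 α a p f) :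
    (∀ t : ℝ, IntegrableOn (fun s => R (t - s) (f s)) (Set.Iio t)) ∧
    (∃ C : ℝ, ∀ t : ℝ, ‖∫ s in Set.Iio t, R (t - s) (f s)‖ ≤ C) ∧
    Continuous (fun t : ℝ => ∫ s in Set.Iio t, R (t - s) (f s)) ∧
    MemBes1 α a p (fun t : ℝ => ∫ s in Set.Iio t, R (t - s) (f s)) := by
  set q := α * p with hq
  have hw := bsw_meas γ
  have hq0 : 0 < q := by linarith
  obtain ⟨A, hA, H⟩ := bs_kernel M β γ q hM hβ hγ hαp hcase1 hcase2
  set k : ℝ → ℝ≥0∞ := (Set.Ioi (0:ℝ)).indicator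
        (fun r => ENNReal.ofReal (M * r ^ (β - 1) / (1 + r ^ γ))) with hkdef
  let R' : ℝ → X →L[ℂ] Y := (Set.Ioi (0:ℝ)).indicator R
  have hR'm : ∀ x, StronglyMeasurable (fun r => R' r x) := by
    intro x
    have e : (fun r => R' r x) = (Set.Ioi (0:ℝ)).indicator (fun r => R r x) := by
      ext r
      by_cases hr : r ∈ Set.Ioi (0:ℝ)
      · simp only [R', Set.indicator_of_mem hr]
      · simp only [R', Set.indicator_of_notMem hr]; rfl
    rw [e]
    exact bs_ind_meas _ (hRcont x)
  have hkm : Measurable k := by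
    apply Measurable.indicator _ measurableSet_Ioi
    fun_prop
  have hkt : ∀ r, k r ≠ ⊤ := by
    intro r
    by_cases hr : r ∈ Set.Ioi (0:ℝ)
    · simp [hkdef, Set.indicator_of_mem hr]
    · simp [hkdef, Set.indicator_of_notMem hr]
  have hk : ∀ r, ‖R' r‖ₑ ≤ k r := by
    intro r
    by_cases hr : r ∈ Set.Ioi (0:ℝ)
    · simp only [R', hkdef, Set.indicator_of_mem hr]
      rw [← ofReal_norm]
      exact ENNReal.ofReal_le_ofReal (hR r hr)
    · simp only [R', Set.indicator_of_notMem hr]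
      rw [← ofReal_norm, norm_zero, ENNReal.ofReal_zero]
      exact zero_le
  -- rewriting F
  have eind : ∀ (t : ℝ), (fun s => R' (t - s) (f s))
      = (Set.Iio t).indicator (fun s => R (t - s) (f s)) := by
    intro t
    ext s
    by_cases hs : s ∈ Set.Iio t
    · have : t - s ∈ Set.Ioi (0:ℝ) := Set.mem_Ioi.2 (_root_.sub_pos.2 (Set.mem_Iio.1 hs))
      simp only [R', Set.indicator_of_mem hs, Set.indicator_of_mem this]
    · have : t - s ∉ Set.Ioi (0:ℝ) := fun h => hs (Set.mem_Iio.2 (_root_.sub_pos.1 (Set.mem_Ioi.1 h)))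
      simp only [R', Set.indicator_of_notMem hs, Set.indicator_of_notMem this]
      rfl
  have eF : ∀ t : ℝ, ∫ s in Set.Iio t, R (t - s) (f s) = ∫ r, R' r (f (t - r)) := by
    intro t
    rw [← integral_indicator measurableSet_Iio, ← eind t,
      ← integral_sub_left_eq_self (fun r => R' r (f (t - r))) volume t]
    simp
  have eN : ∀ x : X, ENNReal.ofReal (‖x‖ ^ q) = ‖x‖ₑ ^ q := by
    intro x
    rw [← ENNReal.ofReal_rpow_of_nonneg (norm_nonneg _) hq0.le, ofReal_norm]
  have eNY : ∀ x : Y, ENNReal.ofReal (‖x‖ ^ q) = ‖x‖ₑ ^ q := by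
    intro x
    rw [← ENNReal.ofReal_rpow_of_nonneg (norm_nonneg _) hq0.le, ofReal_norm]
  obtain ⟨C, hC, hCf⟩ := hfStep
  simp_rw [eN] at hCf
  have hst := bs_stepanov γ (by linarith) (fun s => ‖f s‖ₑ ^ q) (hfmeas.enorm.pow_const _) C hCf
  set N : ℝ≥0∞ := ENNReal.ofReal (2 ^ γ) * C * ∫⁻ r, bsw γ r with hN
  have hNt : N ≠ ⊤ := ENNReal.mul_ne_top (ENNReal.mul_ne_top ENNReal.ofReal_ne_top hC.ne)
    (bsw_int γ hγ).ne
  have hfin : ∀ t, ∫⁻ r, bsw γ r * ‖f (t - r)‖ₑ ^ q ≠ ⊤ := fun t => ne_top_of_le_ne_top hNt (hst t)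
  have mf : ∀ t : ℝ, StronglyMeasurable (fun r => f (t - r)) := fun t =>
    hfmeas.comp_measurable (by fun_prop)
  have hIntg : ∀ t, Integrable (fun r => R' r (f (t - r))) := fun t =>
    bs_integrable γ q hαp R' hR'm k hk A hA H _ (mf t) (hfin t)
  simp_rw [eF]
  refine ⟨fun t => ?_, ?_, ?_, ?_⟩
  · rw [← integrable_indicator_iff measurableSet_Iio, ← eind t]
    have := (hIntg t).comp_sub_left t
    simpa using this
  · refine ⟨((A * N) ^ (1 / q)).toReal, fun t => ?_⟩
    have B := (bs_norm γ q hαp R' k hk A H _ (mf t)).trans (mul_le_mul_right (hst t) A)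
    have B2 := ENNReal.rpow_le_rpow B (z := 1 / q) (by positivity)
    rw [← ENNReal.rpow_mul, mul_one_div_cancel hq0.ne', ENNReal.rpow_one] at B2
    rw [← toReal_enorm]
    exact ENNReal.toReal_mono (ENNReal.rpow_ne_top_of_nonneg (by positivity)
      (ENNReal.mul_ne_top hA hNt)) B2
  · exact bs_cont γ q hγ hαp R' hR'm k hkm hkt hk A hA H f hfmeas hfin
  · obtain ⟨P, hP, hPt⟩ := hf
    refine ⟨fun j t => ∫ r, R' r (P j (t - r)), fun j =>
      bs_trig γ q hγ hαp R' hR'm k hk A hA H (hP j), ?_⟩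
    rw [← hq] at hPt ⊢
    simp_rw [eN] at hPt
    simp_rw [eNY]
    have hest : ∀ j, limsup (fun t : ℝ => ENNReal.ofReal (t ^ (-a)) *
        (∫⁻ s in Set.Icc (-t) t,
          ‖(∫ r, R' r (f (s - r))) - ∫ r, R' r (P j (s - r))‖ₑ ^ q) ^ (1 / p)) atTop
        ≤ (ENNReal.ofReal (2 ^ a) * (A * ∫⁻ r, bsw γ r) ^ (1 / p)) *
          limsup (fun t : ℝ => ENNReal.ofReal (t ^ (-a)) *
            (∫⁻ s in Set.Icc (-t) t, ‖f s - P j s‖ₑ ^ q) ^ (1 / p)) atTop := by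
      intro j
      obtain ⟨hPc, D, hD⟩ := bs_trig_cont (hP j)
      have hPm := hPc.stronglyMeasurable
      have hfm : Measurable (fun s => ‖f s - P j s‖ₑ ^ q) :=
        (hfmeas.sub hPm).enorm.pow_const _
      have mP : ∀ t : ℝ, StronglyMeasurable (fun r => P j (t - r)) := fun t =>
        hPm.comp_measurable (by fun_prop)
      refine bs_limsup γ a p hγ ha hp hap A hA (fun s => ‖f s - P j s‖ₑ ^ q) _ hfm ?_ ?_
      · intro t
        have i2 := bs_integrable γ q hαp R' hR'm k hk A hA H _ (mP t)
          (bs_bdd_fin γ q hγ hαp _ D (fun r => hD _))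
        rw [← integral_sub (hIntg t) i2]
        simp_rw [← map_sub]
        exact bs_norm γ q hαp R' k hk A H _ ((mf t).sub (mP t))
      · have hf0 : ∫⁻ s, bsw γ s * ‖f s‖ₑ ^ q ≠ ⊤ := by
          have := hfin 0
          rw [← lintegral_sub_left_eq_self (fun r => bsw γ r * ‖f (0 - r)‖ₑ ^ q) 0] at this
          simpa [bsw_neg] using this
        have hP0 := bs_bdd_fin γ q hγ hαp (P j) D hD
        have m1 : Measurable (fun s => bsw γ s * ‖f s‖ₑ ^ q) :=
          hw.mul (hfmeas.enorm.pow_const _)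
        have m2 : Measurable (fun s => bsw γ s * ‖P j s‖ₑ ^ q) :=
          hw.mul (hPm.enorm.pow_const _)
        have c2 : (2 : ℝ≥0∞) ^ (q - 1) ≠ ⊤ :=
          ENNReal.rpow_ne_top_of_nonneg (by linarith) (by norm_num)
        refine ne_top_of_le_ne_top (b := 2 ^ (q - 1) *
          ((∫⁻ s, bsw γ s * ‖f s‖ₑ ^ q) + ∫⁻ s, bsw γ s * ‖P j s‖ₑ ^ q))
          (ENNReal.mul_ne_top c2 (ENNReal.add_ne_top.2 ⟨hf0, hP0⟩)) ?_
        have m3 : Measurable (fun s => bsw γ s * ‖f s‖ₑ ^ q + bsw γ s * ‖P j s‖ₑ ^ q) := m1.add m2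
        rw [← lintegral_add_left m1, ← lintegral_const_mul _ m3]
        refine lintegral_mono fun s => ?_
        have h1 : ‖f s - P j s‖ₑ ^ q ≤ 2 ^ (q - 1) * (‖f s‖ₑ ^ q + ‖P j s‖ₑ ^ q) :=
          (ENNReal.rpow_le_rpow (enorm_sub_le) hq0.le).trans
            (ENNReal.rpow_add_le_mul_rpow_add_rpow _ _ hαp)
        calc bsw γ s * ‖f s - P j s‖ₑ ^ q
            ≤ bsw γ s * (2 ^ (q - 1) * (‖f s‖ₑ ^ q + ‖P j s‖ₑ ^ q)) := mul_le_mul_right h1 _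
          _ = _ := by
            generalize (2 : ℝ≥0∞) ^ (q - 1) = c
            ring
    have hK : ENNReal.ofReal (2 ^ a) * (A * ∫⁻ r, bsw γ r) ^ (1 / p) ≠ ⊤ :=
      ENNReal.mul_ne_top ENNReal.ofReal_ne_top (ENNReal.rpow_ne_top_of_nonneg (by positivity)
        (ENNReal.mul_ne_top hA (bsw_int γ hγ).ne))
    have hlim := ENNReal.Tendsto.const_mul hPt (Or.inr hK)
    rw [mul_zero] at hlim
    exact tendsto_of_tendsto_of_tendsto_of_le_of_le tendsto_const_nhds hlim
      (fun _ => zero_le) hest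
end
end

section
/- Let (R(t))_{t>0} ⊆ L(X,Y) be a strongly continuous operator family satisfying ‖R(t)‖_{L(X,Y)} ≤ M·t^{β−1}/(1+t^γ) for all t > 0, with constants M > 0, β ∈ (0,1] and γ > 1. Let a > 0, α > 0, p ∈ [1,∞) with αp ≥ 1 and ap ≥ 1, and assume αp(β−1)/(αp−1) > −1 in case αp > 1, and β = 1 in case αp = 1. Let f : ℝ → X be Lebesgue measurable, belong to e-(x^α, t^{−a})-B^p(ℝ : X), and satisfy ‖f(t)‖ ≤ M₀·(1+|t|)^b for all t ∈ ℝ, for some M₀ > 0 and some b ∈ [0, γ−β). Then the function F(t) := ∫_{−∞}^{t} R(t−s) f(s) ds is well-defined, continuous, belongs to e-(x^α, t^{−a})-B^p(ℝ : Y), and there exists M′ > 0 with ‖F(t)‖_Y ≤ M′·(1+|t|)^b for all t ∈ ℝ. -/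
open MeasureTheory Filter Topology ENNReal NNReal

noncomputable section

lemma kern_nonneg {M β γ u : ℝ} (hM : 0 < M) (hu : 0 < u) :
    0 ≤ M * u ^ (β - 1) / (1 + u ^ γ) := by positivity

lemma kern_le {M β γ δ u : ℝ} (hM : 0 < M) (hβ : β ≤ 1) (hγ : 1 < γ) (hδ : 0 < δ)
    (hu : δ ≤ u) :
    M * u ^ (β - 1) / (1 + u ^ γ) ≤
      (M * (δ / (1 + δ)) ^ (β - 1) * 2 ^ γ) * (1 + u) ^ (-(γ + 1 - β)) := by
  have hu0 : 0 < u := lt_of_lt_of_le hδ hu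
  have h1 : u ^ (β - 1) ≤ (δ / (1 + δ)) ^ (β - 1) * (1 + u) ^ (β - 1) := by
    rw [← Real.mul_rpow (by positivity) (by positivity)]
    apply Real.rpow_le_rpow_of_nonpos (by positivity) _ (by linarith)
    rw [div_mul_eq_mul_div, div_le_iff₀ (by positivity)]
    nlinarith
  have h2 : (1 + u) ^ γ ≤ 2 ^ γ * (1 + u ^ γ) := by
    rcases le_total u 1 with h | h
    · calc (1 + u) ^ γ ≤ 2 ^ γ := Real.rpow_le_rpow (by positivity) (by linarith) (by linarith)
        _ ≤ 2 ^ γ * (1 + u ^ γ) := le_mul_of_one_le_right (by positivity)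
            (by have : 0 ≤ u ^ γ := by positivity
                linarith)
    · calc (1 + u) ^ γ ≤ (2 * u) ^ γ :=
            Real.rpow_le_rpow (by positivity) (by linarith) (by linarith)
        _ = 2 ^ γ * u ^ γ := Real.mul_rpow (by positivity) (by positivity)
        _ ≤ 2 ^ γ * (1 + u ^ γ) := by gcongr; linarith
  have h3 : (1 + u) ^ (-(γ + 1 - β)) = (1 + u) ^ (β - 1) / (1 + u) ^ γ := by
    rw [← Real.rpow_sub (by positivity)]; congr 1; ring
  rw [h3, div_le_iff₀ (by positivity)]
  have h4 : 1 ≤ 2 ^ γ * (1 + u ^ γ) / (1 + u) ^ γ := by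
    rw [le_div_iff₀ (by positivity)]; linarith
  calc M * u ^ (β - 1) ≤ M * ((δ / (1 + δ)) ^ (β - 1) * (1 + u) ^ (β - 1)) := by gcongr
    _ ≤ M * ((δ / (1 + δ)) ^ (β - 1) * (1 + u) ^ (β - 1)) *
        (2 ^ γ * (1 + u ^ γ) / (1 + u) ^ γ) := le_mul_of_one_le_right (by positivity) h4
    _ = _ := by ring

lemma kern_meas (M β γ : ℝ) : Measurable (fun u : ℝ => M * u ^ (β - 1) / (1 + u ^ γ)) := by
  fun_prop

lemma kern_integrable {M β γ b : ℝ} (hM : 0 < M) (hβ : β ∈ Set.Ioc (0 : ℝ) 1) (hγ : 1 < γ)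
    (hb : 0 ≤ b) (hbγ : b < γ - β) :
    IntegrableOn (fun u : ℝ => M * u ^ (β - 1) / (1 + u ^ γ) * (1 + u) ^ b) (Set.Ioi 0) := by
  have hm : Measurable (fun u : ℝ => M * u ^ (β - 1) / (1 + u ^ γ) * (1 + u) ^ b) := by fun_prop
  rw [← Set.Ioc_union_Ioi_eq_Ioi (zero_le_one (α := ℝ))]
  apply IntegrableOn.union
  · have h1 : IntegrableOn (fun u : ℝ => (M * 2 ^ b) * u ^ (β - 1)) (Set.Ioc 0 1) := by
      have := intervalIntegral.intervalIntegrable_rpow' (a := 0) (b := 1) (r := β - 1)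
        (by linarith [hβ.1])
      rw [intervalIntegrable_iff_integrableOn_Ioc_of_le zero_le_one] at this
      exact this.const_mul _
    refine Integrable.mono' h1 hm.aestronglyMeasurable ?_
    filter_upwards [ae_restrict_mem measurableSet_Ioc] with u hu
    have hu0 : 0 < u := hu.1
    rw [Real.norm_of_nonneg (by positivity)]
    calc M * u ^ (β - 1) / (1 + u ^ γ) * (1 + u) ^ b ≤ M * u ^ (β - 1) * 2 ^ b := by
          gcongr
          · apply div_le_self (by positivity)
            have : 0 ≤ u ^ γ := by positivity
            linarith
          · linarith [hu.2]
      _ = _ := by ring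
  · have h1 : IntegrableOn (fun u : ℝ => (M * 2 ^ b) * u ^ (β - 1 - γ + b)) (Set.Ioi 1) :=
      (integrableOn_Ioi_rpow_of_lt (by linarith) one_pos).const_mul _
    refine Integrable.mono' h1 hm.aestronglyMeasurable ?_
    filter_upwards [ae_restrict_mem measurableSet_Ioi] with u hu
    have hu1 : 1 < u := hu
    have hu0 : 0 < u := by linarith
    rw [Real.norm_of_nonneg (by positivity)]
    calc M * u ^ (β - 1) / (1 + u ^ γ) * (1 + u) ^ b
          ≤ M * u ^ (β - 1) / u ^ γ * (2 * u) ^ b := by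
          gcongr <;> linarith
      _ = _ := by
          rw [Real.mul_rpow (by norm_num) hu0.le, Real.rpow_add hu0, Real.rpow_sub hu0 _ γ]; ring

lemma growth_mul {t s b : ℝ} (hb : 0 ≤ b) :
    (1 + |t - s|) ^ b ≤ (1 + |t|) ^ b * (1 + |s|) ^ b := by
  rw [← Real.mul_rpow (by positivity) (by positivity)]
  apply Real.rpow_le_rpow (by positivity) _ hb
  have := abs_sub t s
  have := mul_nonneg (abs_nonneg t) (abs_nonneg s)
  nlinarith

lemma setIntegral_flip {E : Type*} [NormedAddCommGroup E] [NormedSpace ℝ E] (G : ℝ → E) (t c : ℝ) :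
    ∫ u in Set.Ioi c, G (t - u) = ∫ s in Set.Iio (t - c), G s := by
  rw [← integral_indicator measurableSet_Ioi, ← integral_indicator measurableSet_Iio,
    ← integral_sub_left_eq_self _ volume t]
  congr 1; ext u
  have : c < t - u ↔ u < t - c := ⟨fun h => by linarith, fun h => by linarith⟩
  simp only [Set.indicator, Set.mem_Ioi, Set.mem_Iio, _root_.sub_sub_cancel, this]

lemma integrableOn_flip {E : Type*} [NormedAddCommGroup E] (G : ℝ → E) (t c : ℝ)
    (h : IntegrableOn (fun u => G (t - u)) (Set.Ioi c)) : IntegrableOn G (Set.Iio (t - c)) := by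
  rw [← integrable_indicator_iff measurableSet_Ioi] at h
  rw [← integrable_indicator_iff measurableSet_Iio]
  have h2 := h.comp_sub_left t
  have h3 : (fun u => (Set.Ioi c).indicator (fun u => G (t - u)) (t - u)) =
      (Set.Iio (t - c)).indicator G := by
    ext u
    have : c < t - u ↔ u < t - c := ⟨fun h => by linarith, fun h => by linarith⟩
    simp only [Set.indicator, Set.mem_Ioi, Set.mem_Iio, _root_.sub_sub_cancel, this]
  rwa [h3] at h2

section
variable {X Y : Type*} [NormedAddCommGroup X] [NormedSpace ℂ X]
    [NormedAddCommGroup Y] [NormedSpace ℂ Y]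

lemma conv_meas (R : ℝ → X →L[ℂ] Y)
    (hRcont : ∀ x : X, ContinuousOn (fun t => R t x) (Set.Ioi 0))
    (M β γ : ℝ) (hR : ∀ t : ℝ, 0 < t → ‖R t‖ ≤ M * t ^ (β - 1) / (1 + t ^ γ))
    (φ : ℝ → X) (hφ : StronglyMeasurable φ) :
    AEStronglyMeasurable (fun u => R u (φ u)) (volume.restrict (Set.Ioi 0)) := by
  have hc : Continuous (fun z : (Set.Ioi (0:ℝ)) × X => R z.1 z.2) := by
    rw [continuous_iff_continuousAt]
    rintro ⟨⟨u0, hu0⟩, x0⟩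
    have hu0' : 0 < u0 := hu0
    unfold ContinuousAt
    rw [tendsto_iff_norm_sub_tendsto_zero]
    have hb : ∀ z : (Set.Ioi (0:ℝ)) × X, ‖R z.1 z.2 - R u0 x0‖ ≤
        (M * (z.1 : ℝ) ^ (β - 1) / (1 + (z.1 : ℝ) ^ γ)) * ‖z.2 - x0‖ + ‖R z.1 x0 - R u0 x0‖ := by
      intro z
      have : R z.1 z.2 - R u0 x0 = R z.1 (z.2 - x0) + (R z.1 x0 - R u0 x0) := by
        rw [map_sub]; abel
      rw [this]
      refine (norm_add_le _ _).trans ?_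
      gcongr
      exact ((R z.1).le_opNorm _).trans (by gcongr; exact hR _ z.1.2)
    refine squeeze_zero (fun _ => norm_nonneg _) hb ?_
    have c1 : ContinuousAt (fun z : (Set.Ioi (0:ℝ)) × X => R z.1 x0) (⟨u0, hu0⟩, x0) := by
      have := (hRcont x0).domRestrict
      exact (this.comp continuous_fst).continuousAt
    have c0 : ContinuousAt (fun z : (Set.Ioi (0:ℝ)) × X => (z.1 : ℝ)) (⟨u0, hu0⟩, x0) := by
      fun_prop
    have c2 : ContinuousAt (fun z : (Set.Ioi (0:ℝ)) × X =>
        (M * (z.1 : ℝ) ^ (β - 1) / (1 + (z.1 : ℝ) ^ γ)) * ‖z.2 - x0‖ + ‖R z.1 x0 - R u0 x0‖)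
        (⟨u0, hu0⟩, x0) := by
      refine ContinuousAt.add (ContinuousAt.mul (ContinuousAt.div ?_ ?_ ?_) ?_) ?_
      · exact continuousAt_const.mul (c0.rpow_const (Or.inl hu0'.ne'))
      · exact continuousAt_const.add (c0.rpow_const (Or.inl hu0'.ne'))
      · simp only; positivity
      · fun_prop
      · exact (c1.sub continuousAt_const).norm
    have := c2.tendsto
    simpa using this
  have hs : StronglyMeasurable (fun u : Set.Ioi (0:ℝ) => R u (φ u)) :=
    hc.comp_stronglyMeasurable
      (measurable_id.stronglyMeasurable.prodMk (hφ.comp_measurable measurable_subtype_coe))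
  rw [← map_comap_subtype_coe measurableSet_Ioi,
    (MeasurableEmbedding.subtype_coe measurableSet_Ioi).aestronglyMeasurable_map_iff]
  exact hs.aestronglyMeasurable

lemma conv_bound (R : ℝ → X →L[ℂ] Y)
    (M β γ : ℝ) (hR : ∀ t : ℝ, 0 < t → ‖R t‖ ≤ M * t ^ (β - 1) / (1 + t ^ γ))
    (φ : ℝ → X) (b C : ℝ) (hb : 0 ≤ b) (hC : 0 ≤ C)
    (hg : ∀ t : ℝ, ‖φ t‖ ≤ C * (1 + |t|) ^ b) (t u : ℝ) (hu : 0 < u) (hM : 0 < M) :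
    ‖R u (φ (t - u))‖ ≤ (C * (1 + |t|) ^ b) *
      (M * u ^ (β - 1) / (1 + u ^ γ) * (1 + u) ^ b) := by
  calc ‖R u (φ (t - u))‖ ≤ ‖R u‖ * ‖φ (t - u)‖ := (R u).le_opNorm _
    _ ≤ (M * u ^ (β - 1) / (1 + u ^ γ)) * (C * ((1 + |t|) ^ b * (1 + u) ^ b)) := by
      gcongr
      · exact hR u hu
      · refine (hg _).trans ?_
        gcongr
        have := growth_mul (t := t) (s := u) hb
        rwa [abs_of_pos hu] at this
    _ = _ := by ring

lemma conv_integrable (R : ℝ → X →L[ℂ] Y)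
    (hRcont : ∀ x : X, ContinuousOn (fun t => R t x) (Set.Ioi 0))
    (M β γ : ℝ) (hM : 0 < M) (hβ : β ∈ Set.Ioc (0 : ℝ) 1) (hγ : 1 < γ)
    (hR : ∀ t : ℝ, 0 < t → ‖R t‖ ≤ M * t ^ (β - 1) / (1 + t ^ γ))
    (φ : ℝ → X) (hφ : StronglyMeasurable φ) (b C : ℝ) (hb : 0 ≤ b) (hbγ : b < γ - β) (hC : 0 ≤ C)
    (hg : ∀ t : ℝ, ‖φ t‖ ≤ C * (1 + |t|) ^ b) (t : ℝ) :
    IntegrableOn (fun u => R u (φ (t - u))) (Set.Ioi 0) := by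
  refine Integrable.mono' ((kern_integrable hM hβ hγ hb hbγ).const_mul (C * (1 + |t|) ^ b))
    (conv_meas R hRcont M β γ hR (fun u => φ (t - u)) (hφ.comp_measurable (by fun_prop))) ?_
  filter_upwards [ae_restrict_mem measurableSet_Ioi] with u hu
  exact conv_bound R M β γ hR φ b C hb hC hg t u hu hM

end
section
variable {X Y : Type*} [NormedAddCommGroup X] [NormedSpace ℂ X]
    [NormedAddCommGroup Y] [NormedSpace ℂ Y]

lemma trunc_cont (R : ℝ → X →L[ℂ] Y)
    (hRcont : ∀ x : X, ContinuousOn (fun t => R t x) (Set.Ioi 0))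
    (M β γ : ℝ) (hM : 0 < M) (hβ : β ∈ Set.Ioc (0 : ℝ) 1) (hγ : 1 < γ)
    (hR : ∀ t : ℝ, 0 < t → ‖R t‖ ≤ M * t ^ (β - 1) / (1 + t ^ γ))
    (φ : ℝ → X) (hφ : StronglyMeasurable φ) (b C : ℝ) (hb : 0 ≤ b) (hbγ : b < γ - β) (hC : 0 ≤ C)
    (hg : ∀ t : ℝ, ‖φ t‖ ≤ C * (1 + |t|) ^ b) (δ : ℝ) (hδ : 0 < δ) :
    Continuous (fun t => ∫ u in Set.Ioi δ, R u (φ (t - u))) := by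
  have e : ∀ t, ∫ u in Set.Ioi δ, R u (φ (t - u)) =
      ∫ s, (Set.Iio (t - δ)).indicator (fun s => R (t - s) (φ s)) s := by
    intro t
    rw [integral_indicator measurableSet_Iio, ← setIntegral_flip]
    simp only [_root_.sub_sub_cancel]
  simp_rw [e]
  rw [continuous_iff_continuousAt]
  intro t0
  set c := γ + 1 - β with hc
  set D := M * (δ / (1 + δ)) ^ (β - 1) * 2 ^ γ with hD
  have hD0 : 0 ≤ D := by positivity
  have hc0 : 0 ≤ c := by have := hβ.2; simp only [hc]; linarith
  refine continuousAt_of_dominated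
    (bound := fun s => (D * 2 ^ c * (C * (1 + |t0|) ^ b)) * (1 + ‖t0 - s‖) ^ (-(c - b)))
    ?_ ?_ ?_ ?_
  · refine Eventually.of_forall fun t => ?_
    rw [aestronglyMeasurable_indicator_iff measurableSet_Iio]
    have h1 := (conv_meas R hRcont M β γ hR (fun u => φ (t - u))
      (hφ.comp_measurable (by fun_prop)))
    have h2 : AEStronglyMeasurable (fun s => R (t - s) (φ s)) (volume.restrict (Set.Iio t)) := by
      rw [← aestronglyMeasurable_indicator_iff measurableSet_Ioi] at h1
      rw [← aestronglyMeasurable_indicator_iff measurableSet_Iio]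
      have h3 := h1.comp_measurePreserving (Measure.measurePreserving_sub_left volume t)
      have h4 : ((Set.Ioi 0).indicator (fun u => R u (φ (t - u)))) ∘ (fun s => t - s) =
          (Set.Iio t).indicator (fun s => R (t - s) (φ s)) := by
        ext u
        simp only [Function.comp, Set.indicator, Set.mem_Ioi, Set.mem_Iio, _root_.sub_sub_cancel, sub_pos]
      rwa [h4] at h3
    exact h2.mono_measure (Measure.restrict_mono (Set.Iio_subset_Iio (by linarith)) le_rfl)
  · filter_upwards [Metric.ball_mem_nhds t0 one_pos] with t ht
    refine Eventually.of_forall fun s => ?_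
    rw [Metric.mem_ball, Real.dist_eq] at ht
    by_cases hs : s ∈ Set.Iio (t - δ)
    · rw [Set.indicator_of_mem hs]
      have hs' : δ ≤ t - s := by have : s < t - δ := hs; linarith
      have hp : 0 < t - s := by linarith
      calc ‖R (t - s) (φ s)‖ ≤ ‖R (t - s)‖ * ‖φ s‖ := (R _).le_opNorm _
        _ ≤ (D * (1 + (t - s)) ^ (-c)) * (C * ((1 + |t0|) ^ b * (1 + |t0 - s|) ^ b)) := by
          gcongr
          · exact (hR _ hp).trans (kern_le hM hβ.2 hγ hδ hs')
          · refine (hg s).trans ?_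
            gcongr
            have := growth_mul (t := t0) (s := t0 - s) hb
            rwa [_root_.sub_sub_cancel] at this
        _ ≤ (D * (2 ^ c * (1 + |t0 - s|) ^ (-c))) *
              (C * ((1 + |t0|) ^ b * (1 + |t0 - s|) ^ b)) := by
          gcongr
          rw [Real.rpow_neg (by positivity), Real.rpow_neg (by positivity), ← div_eq_mul_inv,
            le_div_iff₀ (by positivity), inv_mul_le_iff₀ (by positivity),
            ← Real.mul_rpow (by positivity) (by positivity)]
          apply Real.rpow_le_rpow (by positivity) _ hc0
          have h1 : |t0 - s| ≤ |t - t0| + (t - s) := by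
            rw [abs_sub_comm t t0, ← abs_of_pos hp]
            exact abs_sub_le _ _ _ 
          linarith
        _ = _ := by
          rw [Real.norm_eq_abs, show -(c - b) = -c + b by ring, Real.rpow_add (by positivity)]
          ring
    · rw [Set.indicator_of_notMem hs, norm_zero]
      positivity
  · refine Integrable.const_mul ?_ _
    have : Integrable (fun x : ℝ => (1 + ‖x‖) ^ (-(c - b))) volume :=
      integrable_one_add_norm (by simp [hc]; linarith)
    exact this.comp_sub_left t0
  · have : ∀ᵐ s : ℝ, s ≠ t0 - δ := by simp [ae_iff]
    filter_upwards [this] with s hs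
    rcases lt_or_gt_of_ne hs with h | h
    · have h1 : ContinuousAt (fun t => R (t - s) (φ s)) t0 := by
        have hcc := (hRcont (φ s)).continuousAt (x := t0 - s)
          (Ioi_mem_nhds (by linarith))
        exact ContinuousAt.comp (f := fun t : ℝ => t - s) (x := t0) hcc (by fun_prop)
      refine h1.congr ?_
      filter_upwards [Ioi_mem_nhds (show s + δ < t0 by linarith)] with t ht
      have : s + δ < t := ht
      rw [Set.indicator_of_mem]
      change s < t - δ
      linarith
    · refine (continuousAt_const (y := (0 : Y))).congr ?_
      filter_upwards [Iio_mem_nhds (show t0 < s + δ by linarith)] with t ht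
      have : t < s + δ := ht
      rw [Set.indicator_of_notMem]
      change ¬ (s < t - δ)
      linarith

lemma conv_norm_le (R : ℝ → X →L[ℂ] Y)
    (M β γ : ℝ) (hM : 0 < M) (hβ : β ∈ Set.Ioc (0 : ℝ) 1) (hγ : 1 < γ)
    (hR : ∀ t : ℝ, 0 < t → ‖R t‖ ≤ M * t ^ (β - 1) / (1 + t ^ γ))
    (φ : ℝ → X) (b C : ℝ) (hb : 0 ≤ b) (hbγ : b < γ - β) (hC : 0 ≤ C)
    (hg : ∀ t : ℝ, ‖φ t‖ ≤ C * (1 + |t|) ^ b) (S : Set ℝ) (hS : MeasurableSet S)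
    (hS0 : S ⊆ Set.Ioi 0) (t : ℝ) :
    ‖∫ u in S, R u (φ (t - u))‖ ≤ (C * (1 + |t|) ^ b) *
      ∫ u in S, (M * u ^ (β - 1) / (1 + u ^ γ) * (1 + u) ^ b) := by
  rw [← integral_const_mul]
  refine norm_integral_le_of_norm_le
    (((kern_integrable hM hβ hγ hb hbγ).mono_set hS0).const_mul _) ?_
  filter_upwards [ae_restrict_mem hS] with u hu
  exact conv_bound R M β γ hR φ b C hb hC hg t u (hS0 hu) hM

lemma conv_cont (R : ℝ → X →L[ℂ] Y)
    (hRcont : ∀ x : X, ContinuousOn (fun t => R t x) (Set.Ioi 0))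
    (M β γ : ℝ) (hM : 0 < M) (hβ : β ∈ Set.Ioc (0 : ℝ) 1) (hγ : 1 < γ)
    (hR : ∀ t : ℝ, 0 < t → ‖R t‖ ≤ M * t ^ (β - 1) / (1 + t ^ γ))
    (φ : ℝ → X) (hφ : StronglyMeasurable φ) (b C : ℝ) (hb : 0 ≤ b) (hbγ : b < γ - β) (hC : 0 ≤ C)
    (hg : ∀ t : ℝ, ‖φ t‖ ≤ C * (1 + |t|) ^ b) :
    Continuous (fun t => ∫ u in Set.Ioi 0, R u (φ (t - u))) := by
  apply continuous_of_locally_uniform_approx_of_continuousAt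
  intro t0 U hU
  obtain ⟨ε, hε, hεU⟩ := Metric.mem_uniformity_dist.1 hU
  set B := C * (1 + (|t0| + 1)) ^ b with hB
  have hB0 : 0 ≤ B := by positivity
  have hlim : Tendsto (fun δ : ℝ =>
      ∫ u in Set.Ioc 0 δ, (M * u ^ (β - 1) / (1 + u ^ γ) * (1 + u) ^ b)) (𝓝[>] 0) (𝓝 0) := by
    have hI := kern_integrable hM hβ hγ hb hbγ
    have := hI.tendsto_setIntegral_nhds_zero (l := 𝓝[>] (0:ℝ)) (s := fun δ => Set.Iic δ) (by
      have : ∀ δ : ℝ, (volume.restrict (Set.Ioi (0:ℝ))) (Set.Iic δ) = ENNReal.ofReal δ := by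
        intro δ
        rw [Measure.restrict_apply measurableSet_Iic, Set.Iic_inter_Ioi, Real.volume_Ioc, sub_zero]
      simp only [Function.comp_def, this]
      have h := (ENNReal.continuous_ofReal.tendsto (0:ℝ))
      rw [ENNReal.ofReal_zero] at h
      exact h.mono_left nhdsWithin_le_nhds)
    refine this.congr fun δ => ?_
    rw [Measure.restrict_restrict measurableSet_Iic, Set.Iic_inter_Ioi]
  have hlim2 := hlim.const_mul B
  rw [mul_zero] at hlim2
  obtain ⟨δ, hδε, hδ⟩ := ((hlim2.eventually (gt_mem_nhds hε)).and
    (self_mem_nhdsWithin)).exists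
  have hδ0 : 0 < δ := hδ
  refine ⟨_, Metric.ball_mem_nhds t0 one_pos, fun t => ∫ u in Set.Ioi δ, R u (φ (t - u)),
    (trunc_cont R hRcont M β γ hM hβ hγ hR φ hφ b C hb hbγ hC hg δ hδ0).continuousAt, ?_⟩
  intro t ht
  apply hεU
  have hint := conv_integrable R hRcont M β γ hM hβ hγ hR φ hφ b C hb hbγ hC hg t
  have hsplit : ∫ u in Set.Ioi 0, R u (φ (t - u)) =
      (∫ u in Set.Ioc 0 δ, R u (φ (t - u))) + ∫ u in Set.Ioi δ, R u (φ (t - u)) := by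
    rw [← setIntegral_union Set.Ioc_disjoint_Ioi_same measurableSet_Ioi
      (hint.mono_set Set.Ioc_subset_Ioi_self) (hint.mono_set (Set.Ioi_subset_Ioi hδ0.le)),
      Set.Ioc_union_Ioi_eq_Ioi hδ0.le]
  rw [hsplit, dist_eq_norm, add_sub_cancel_right]
  refine lt_of_le_of_lt ?_ hδε
  refine (conv_norm_le R M β γ hM hβ hγ hR φ b C hb hbγ hC hg _ measurableSet_Ioc
    Set.Ioc_subset_Ioi_self t).trans ?_
  have h0 : 0 ≤ ∫ u in Set.Ioc 0 δ, (M * u ^ (β - 1) / (1 + u ^ γ) * (1 + u) ^ b) := by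
    apply setIntegral_nonneg measurableSet_Ioc
    intro u hu
    have : 0 < u := hu.1
    positivity
  gcongr
  rw [hB]
  gcongr
  rw [Metric.mem_ball, Real.dist_eq] at ht
  have := abs_sub_abs_le_abs_sub t t0
  linarith

end
lemma jensen_aux {μ : Measure ℝ} (k h : ℝ → ℝ≥0∞) (hk : Measurable k) (hh : Measurable h)
    (hkt : ∀ u, k u ≠ ⊤) (q : ℝ) (hq : 1 ≤ q) :
    (∫⁻ u, k u * h u ∂μ) ^ q ≤ (∫⁻ u, k u ∂μ) ^ (q - 1) * ∫⁻ u, k u * h u ^ q ∂μ := by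
  have hq0 : 0 < q := by linarith
  have h1 := ENNReal.lintegral_mul_norm_pow_le (μ := μ) (f := k) (g := fun u => k u * h u ^ q)
    hk.aemeasurable (by fun_prop) (p := 1 - 1 / q) (q := 1 / q)
    (by rw [sub_nonneg, div_le_one hq0]; exact hq) (by positivity) (by ring)
  have h2 : ∀ u, k u ^ (1 - 1 / q) * (k u * h u ^ q) ^ (1 / q) = k u * h u := by
    intro u
    rw [ENNReal.mul_rpow_of_nonneg _ _ (by positivity), ← ENNReal.rpow_mul,
      mul_one_div_cancel hq0.ne', ENNReal.rpow_one, ← mul_assoc]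
    congr 1
    by_cases h0 : k u = 0
    · rw [h0, ENNReal.zero_rpow_of_pos (y := 1 / q) (by positivity), mul_zero]
    · rw [← ENNReal.rpow_add _ _ h0 (hkt u), sub_add_cancel, ENNReal.rpow_one]
  simp only [h2] at h1
  calc (∫⁻ u, k u * h u ∂μ) ^ q
      ≤ ((∫⁻ u, k u ∂μ) ^ (1 - 1 / q) * (∫⁻ u, k u * h u ^ q ∂μ) ^ (1 / q)) ^ q := by gcongr
    _ = _ := by
      rw [ENNReal.mul_rpow_of_nonneg _ _ hq0.le, ← ENNReal.rpow_mul, ← ENNReal.rpow_mul,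
        one_div_mul_cancel hq0.ne', ENNReal.rpow_one]
      congr 2
      field_simp

lemma young_aux (k h : ℝ → ℝ≥0∞) (hk : Measurable k) (hh : Measurable h)
    (hkt : ∀ u, k u ≠ ⊤) (hki : ∫⁻ u in Set.Ioi 0, k u ≠ ⊤) (q : ℝ) (hq : 1 ≤ q) (t : ℝ) :
    ∫⁻ s in Set.Icc (-t) t, (∫⁻ u in Set.Ioc 0 t, k u * h (s - u)) ^ q ≤
      (∫⁻ u in Set.Ioi 0, k u) ^ q * ∫⁻ s in Set.Icc (-(2 * t)) (2 * t), h s ^ q := by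
  set κ := ∫⁻ u in Set.Ioi 0, k u with hκ
  have hle : ∫⁻ u in Set.Ioc 0 t, k u ≤ κ := lintegral_mono_set Set.Ioc_subset_Ioi_self
  calc ∫⁻ s in Set.Icc (-t) t, (∫⁻ u in Set.Ioc 0 t, k u * h (s - u)) ^ q
      ≤ ∫⁻ s in Set.Icc (-t) t, κ ^ (q - 1) * ∫⁻ u in Set.Ioc 0 t, k u * h (s - u) ^ q := by
        refine lintegral_mono fun s => ?_
        refine (jensen_aux k (fun u => h (s - u)) hk (by fun_prop) hkt q hq).trans ?_
        gcongr
    _ = κ ^ (q - 1) * ∫⁻ s in Set.Icc (-t) t, ∫⁻ u in Set.Ioc 0 t, k u * h (s - u) ^ q := by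
        rw [lintegral_const_mul']
        exact ENNReal.rpow_ne_top_of_nonneg (by linarith) hki
    _ = κ ^ (q - 1) * ∫⁻ u in Set.Ioc 0 t, ∫⁻ s in Set.Icc (-t) t, k u * h (s - u) ^ q := by
        rw [lintegral_lintegral_swap]
        apply Measurable.aemeasurable
        unfold Function.uncurry
        fun_prop
    _ ≤ κ ^ (q - 1) * ∫⁻ u in Set.Ioc 0 t,
          k u * ∫⁻ s in Set.Icc (-(2 * t)) (2 * t), h s ^ q := by
        gcongr κ ^ (q - 1) * ?_
        refine setLIntegral_mono' measurableSet_Ioc fun u hu => ?_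
        rw [lintegral_const_mul' _ _ (hkt u)]
        gcongr k u * ?_
        rw [← lintegral_indicator measurableSet_Icc, ← lintegral_indicator measurableSet_Icc,
          ← lintegral_sub_right_eq_self ((Set.Icc (-(2 * t)) (2 * t)).indicator _) u]
        refine lintegral_mono fun s => ?_
        by_cases hs : s ∈ Set.Icc (-t) t
        · rw [Set.indicator_of_mem hs, Set.indicator_of_mem]
          constructor <;> linarith [hs.1, hs.2, hu.1, hu.2]
        · rw [Set.indicator_of_notMem hs]; exact zero_le
    _ ≤ κ ^ (q - 1) * (κ * ∫⁻ s in Set.Icc (-(2 * t)) (2 * t), h s ^ q) := by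
        gcongr κ ^ (q - 1) * ?_
        rw [lintegral_mul_const _ hk]
        gcongr
    _ = _ := by
        rw [← mul_assoc]
        congr 1
        nth_rewrite 2 [← ENNReal.rpow_one κ]
        rw [← ENNReal.rpow_add_of_nonneg _ _ (by linarith) zero_le_one, sub_add_cancel]

/-- limsup estimate -/
lemma limsup_aux (a p α : ℝ) (hα : 0 < α) (hp : 1 ≤ p) (hap : 1 ≤ a * p)
    (c κ : ℝ≥0∞) (hc : c ≠ ⊤) (hκ : κ ≠ ⊤) (I G : ℝ → ℝ≥0∞) (η : ℝ → ℝ≥0∞)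
    (hη : Tendsto η atTop (𝓝 0))
    (hI : ∀ t, 1 ≤ t → I t ≤ c * (κ * G (2 * t) + ENNReal.ofReal (2 * t) * η t ^ (α * p))) :
    limsup (fun t : ℝ => ENNReal.ofReal (t ^ (-a)) * I t ^ (1 / p)) atTop ≤
      ((c * κ) ^ (1 / p) * ENNReal.ofReal (2 ^ a)) *
        limsup (fun t : ℝ => ENNReal.ofReal (t ^ (-a)) * G t ^ (1 / p)) atTop := by
  have hp0 : 0 < p := by linarith
  have hp1 : 0 ≤ 1 / p := by positivity
  have hC1 : (c * κ) ^ (1 / p) * ENNReal.ofReal (2 ^ a) ≠ ⊤ :=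
    ENNReal.mul_ne_top (ENNReal.rpow_ne_top_of_nonneg hp1 (ENNReal.mul_ne_top hc hκ))
      ENNReal.ofReal_ne_top
  have hC2 : c ^ (1 / p) * ENNReal.ofReal (2 ^ (1 / p)) ≠ ⊤ :=
    ENNReal.mul_ne_top (ENNReal.rpow_ne_top_of_nonneg hp1 hc) ENNReal.ofReal_ne_top
  set D : ℝ → ℝ≥0∞ := fun t => ENNReal.ofReal (t ^ (-a)) * G t ^ (1 / p) with hD
  have key : ∀ t, 1 ≤ t → ENNReal.ofReal (t ^ (-a)) * I t ^ (1 / p) ≤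
      ((c * κ) ^ (1 / p) * ENNReal.ofReal (2 ^ a)) * D (2 * t) +
        (c ^ (1 / p) * ENNReal.ofReal (2 ^ (1 / p))) * η t ^ α := by
    intro t ht
    have ht0 : 0 < t := by linarith
    have e1 : ENNReal.ofReal (t ^ (-a)) =
        ENNReal.ofReal (2 ^ a) * ENNReal.ofReal ((2 * t) ^ (-a)) := by
      rw [← ENNReal.ofReal_mul (by positivity), Real.mul_rpow (by norm_num) ht0.le, ← mul_assoc,
        ← Real.rpow_add (by norm_num), add_neg_cancel, Real.rpow_zero, one_mul]
    have e2 : ENNReal.ofReal (t ^ (-a)) * ENNReal.ofReal (2 * t) ^ (1 / p) ≤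
        ENNReal.ofReal (2 ^ (1 / p)) := by
      rw [ENNReal.ofReal_rpow_of_pos (by positivity), ← ENNReal.ofReal_mul (by positivity)]
      apply ENNReal.ofReal_le_ofReal
      rw [Real.mul_rpow (by norm_num) ht0.le]
      have : t ^ (-a) * t ^ (1 / p) ≤ 1 := by
        rw [← Real.rpow_add ht0]
        apply Real.rpow_le_one_of_one_le_of_nonpos ht
        have : 1 / p ≤ a := by rw [div_le_iff₀ hp0]; exact hap
        linarith
      calc t ^ (-a) * (2 ^ (1 / p) * t ^ (1 / p)) = 2 ^ (1 / p) * (t ^ (-a) * t ^ (1 / p)) := by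
            ring
        _ ≤ 2 ^ (1 / p) := mul_le_of_le_one_right (by positivity) this
    calc ENNReal.ofReal (t ^ (-a)) * I t ^ (1 / p)
        ≤ ENNReal.ofReal (t ^ (-a)) *
            (c * κ * G (2 * t) + c * (ENNReal.ofReal (2 * t) * η t ^ (α * p))) ^ (1 / p) := by
          gcongr
          refine (hI t ht).trans (le_of_eq ?_)
          ring
      _ ≤ ENNReal.ofReal (t ^ (-a)) * ((c * κ * G (2 * t)) ^ (1 / p) +
            (c * (ENNReal.ofReal (2 * t) * η t ^ (α * p))) ^ (1 / p)) := by
          gcongr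
          exact ENNReal.rpow_add_le_add_rpow _ _ hp1 (by rw [div_le_one hp0]; exact hp)
      _ = (c * κ) ^ (1 / p) * (ENNReal.ofReal (t ^ (-a)) * G (2 * t) ^ (1 / p)) +
            c ^ (1 / p) * (ENNReal.ofReal (t ^ (-a)) * ENNReal.ofReal (2 * t) ^ (1 / p)) *
              η t ^ α := by
          rw [ENNReal.mul_rpow_of_nonneg (c * κ) _ hp1, ENNReal.mul_rpow_of_nonneg c (_ * _) hp1,
            ENNReal.mul_rpow_of_nonneg (ENNReal.ofReal (2 * t)) _ hp1, ← ENNReal.rpow_mul (η t),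
            mul_assoc α, mul_one_div_cancel hp0.ne', mul_one]
          ring
      _ ≤ (c * κ) ^ (1 / p) * (ENNReal.ofReal (t ^ (-a)) * G (2 * t) ^ (1 / p)) +
            c ^ (1 / p) * ENNReal.ofReal (2 ^ (1 / p)) * η t ^ α := by
          gcongr
      _ = _ := by
          rw [e1, hD]; ring
  have hη2 : Tendsto (fun t => (c ^ (1 / p) * ENNReal.ofReal (2 ^ (1 / p))) * η t ^ α) atTop
      (𝓝 0) := by
    have h1 : Tendsto (fun t => η t ^ α) atTop (𝓝 0) := by
      have := (ENNReal.continuous_rpow_const (y := α)).continuousAt.tendsto.comp hη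
      rwa [ENNReal.zero_rpow_of_pos hα] at this
    have := ENNReal.Tendsto.const_mul h1 (Or.inr hC2)
    rwa [mul_zero] at this
  calc limsup (fun t : ℝ => ENNReal.ofReal (t ^ (-a)) * I t ^ (1 / p)) atTop
      ≤ limsup (fun t => ((c * κ) ^ (1 / p) * ENNReal.ofReal (2 ^ a)) * D (2 * t) +
        (c ^ (1 / p) * ENNReal.ofReal (2 ^ (1 / p))) * η t ^ α) atTop := by
        refine limsup_le_limsup ?_
        filter_upwards [eventually_ge_atTop 1] with t ht using key t ht
    _ = limsup (fun t => ((c * κ) ^ (1 / p) * ENNReal.ofReal (2 ^ a)) * D (2 * t)) atTop :=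
        ENNReal.limsup_add_of_right_tendsto_zero hη2 _
    _ = ((c * κ) ^ (1 / p) * ENNReal.ofReal (2 ^ a)) * limsup (fun t => D (2 * t)) atTop :=
        ENNReal.limsup_const_mul_of_ne_top hC1
    _ ≤ _ := by
        gcongr
        have ht : Tendsto (fun t : ℝ => 2 * t) atTop atTop :=
          tendsto_id.const_mul_atTop (by norm_num)
        change limsup (D ∘ fun t => 2 * t) atTop ≤ _
        exact limsup_le_limsup_of_le (u := D) ht
section
variable {X Y : Type*} [NormedAddCommGroup X] [NormedSpace ℂ X]
    [NormedAddCommGroup Y] [NormedSpace ℂ Y]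

lemma enq {E : Type*} [NormedAddCommGroup E] (q : ℝ) (hq0 : 0 ≤ q) (y : E) :
    ENNReal.ofReal (‖y‖ ^ q) = ‖y‖ₑ ^ q := by
  rw [← ofReal_norm, ENNReal.ofReal_rpow_of_nonneg (norm_nonneg _) hq0]

lemma trig_cont {P : ℝ → X} (hP : IsTrigPoly1 P) : Continuous P := by
  obtain ⟨m, lam, c, h⟩ := hP
  rw [show P = _ from funext h]
  fun_prop

lemma exp_norm (x : ℝ) : ‖Complex.exp (Complex.I * (x : ℂ))‖ = 1 := by
  rw [mul_comm]; exact Complex.norm_exp_ofReal_mul_I x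

lemma trig_bdd {P : ℝ → X} (hP : IsTrigPoly1 P) : ∃ C : ℝ, 0 ≤ C ∧ ∀ t, ‖P t‖ ≤ C := by
  obtain ⟨m, lam, c, h⟩ := hP
  refine ⟨∑ j, ‖c j‖, Finset.sum_nonneg fun _ _ => norm_nonneg _, fun t => ?_⟩
  rw [h]
  refine (norm_sum_le _ _).trans (Finset.sum_le_sum fun j _ => ?_)
  rw [norm_smul, exp_norm, one_mul]

lemma conv_trig [CompleteSpace Y] (R : ℝ → X →L[ℂ] Y)
    (hRcont : ∀ x : X, ContinuousOn (fun t => R t x) (Set.Ioi 0))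
    (M β γ : ℝ) (hM : 0 < M) (hβ : β ∈ Set.Ioc (0 : ℝ) 1) (hγ : 1 < γ)
    (hR : ∀ t : ℝ, 0 < t → ‖R t‖ ≤ M * t ^ (β - 1) / (1 + t ^ γ))
    (P : ℝ → X) (hP : IsTrigPoly1 P) :
    IsTrigPoly1 (fun t => ∫ u in Set.Ioi 0, R u (P (t - u))) := by
  obtain ⟨m, lam, c, h⟩ := hP
  refine ⟨m, lam, fun j => ∫ u in Set.Ioi 0,
    R u (Complex.exp (Complex.I * ((lam j * (0 - u) : ℝ) : ℂ)) • c j), fun t => ?_⟩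
  have hint : ∀ j, IntegrableOn (fun u => R u
      (Complex.exp (Complex.I * ((lam j * (0 - u) : ℝ) : ℂ)) • c j)) (Set.Ioi 0) := by
    intro j
    refine conv_integrable R hRcont M β γ hM hβ hγ hR
      (fun s => Complex.exp (Complex.I * ((lam j * s : ℝ) : ℂ)) • c j)
      (Continuous.stronglyMeasurable (by fun_prop)) 0 ‖c j‖ le_rfl (by linarith [hβ.2])
      (norm_nonneg _) (fun s => ?_) 0
    rw [norm_smul, exp_norm, one_mul, Real.rpow_zero, mul_one]
  simp only [← integral_smul]
  rw [← integral_finsetSum _ (fun j _ => (hint j).fun_smul (Complex.exp (Complex.I * ((lam j * t : ℝ) : ℂ))))]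
  congr 1
  ext u
  rw [h, map_sum]
  refine Finset.sum_congr rfl fun j _ => ?_
  rw [← map_smul, smul_smul, ← Complex.exp_add]
  congr 3
  push_cast
  ring

lemma conv_bes [CompleteSpace Y] (R : ℝ → X →L[ℂ] Y)
    (hRcont : ∀ x : X, ContinuousOn (fun t => R t x) (Set.Ioi 0))
    (M β γ : ℝ) (hM : 0 < M) (hβ : β ∈ Set.Ioc (0 : ℝ) 1) (hγ : 1 < γ)
    (hR : ∀ t : ℝ, 0 < t → ‖R t‖ ≤ M * t ^ (β - 1) / (1 + t ^ γ))
    (a α p : ℝ) (hα : 0 < α) (hp : 1 ≤ p)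
    (hαp : 1 ≤ α * p) (hap : 1 ≤ a * p)
    (f : ℝ → X) (hfmeas : StronglyMeasurable f)
    (hf : MemBes1 α a p f)
    (b : ℝ) (hb : 0 ≤ b) (hbγ : b < γ - β)
    (M₀ : ℝ) (hM₀ : 0 < M₀)
    (hfgrow : ∀ t : ℝ, ‖f t‖ ≤ M₀ * (1 + |t|) ^ b) :
    MemBes1 α a p (fun t => ∫ u in Set.Ioi 0, R u (f (t - u))) := by
  obtain ⟨P, hP, hlim⟩ := hf
  set k : ℝ → ℝ≥0∞ := fun u => ENNReal.ofReal (M * u ^ (β - 1) / (1 + u ^ γ)) with hk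
  have hkm : Measurable k := (kern_meas M β γ).ennreal_ofReal
  have hkt : ∀ u, k u ≠ ⊤ := fun u => ENNReal.ofReal_ne_top
  have hW : ∀ b', 0 ≤ b' → b' < γ - β →
      ∫⁻ u in Set.Ioi 0, k u * ENNReal.ofReal ((1 + u) ^ b') ≠ ⊤ := by
    intro b' hb' hbγ'
    have h1 := (kern_integrable hM hβ hγ hb' hbγ').lintegral_lt_top.ne
    refine ne_of_eq_of_ne (setLIntegral_congr_fun measurableSet_Ioi fun u hu => ?_) h1
    have : 0 < u := hu
    simp only [hk]
    rw [ENNReal.ofReal_mul (by positivity)]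
  have hki : ∫⁻ u in Set.Ioi 0, k u ≠ ⊤ := by
    have := hW 0 le_rfl (by linarith [hβ.2])
    simpa using this
  set κ := ∫⁻ u in Set.Ioi 0, k u with hκ
  set W : ℝ → ℝ≥0∞ := fun u => k u * ENNReal.ofReal ((1 + u) ^ b) with hWdef
  have hWm : Measurable W := by
    have : Measurable (fun u : ℝ => ENNReal.ofReal ((1 + u) ^ b)) := by fun_prop
    exact hkm.mul this
  -- tail of the weighted kernel
  have htail : Tendsto (fun t : ℝ => ∫⁻ u in Set.Ioi t, W u) atTop (𝓝 0) := by
    have h1 : Tendsto (fun t : ℝ => ∫⁻ u in Set.Ioi 0, (Set.Ioi t).indicator W u) atTop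
        (𝓝 (∫⁻ u in Set.Ioi (0:ℝ), (0 : ℝ≥0∞))) := by
      refine tendsto_lintegral_filter_of_dominated_convergence W
        (Eventually.of_forall fun t => hWm.indicator measurableSet_Ioi)
        (Eventually.of_forall fun t => Eventually.of_forall fun u =>
          Set.indicator_le_self _ _ _) (hW b hb hbγ) ?_
      refine Eventually.of_forall fun u => ?_
      refine tendsto_const_nhds.congr' ?_
      filter_upwards [eventually_ge_atTop u] with t ht
      rw [Set.indicator_of_notMem]
      simpa using ht
    rw [lintegral_zero] at h1
    refine h1.congr' ?_
    filter_upwards [eventually_ge_atTop 0] with t ht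
    rw [lintegral_indicator measurableSet_Ioi, Measure.restrict_restrict measurableSet_Ioi,
      Set.inter_eq_left.2 (Set.Ioi_subset_Ioi ht)]
  set q := α * p with hq
  refine ⟨fun n t => ∫ u in Set.Ioi 0, R u (P n (t - u)),
    fun n => conv_trig R hRcont M β γ hM hβ hγ hR (P n) (hP n), ?_⟩
  have hq0 : 0 ≤ q := by linarith
  have hc : (2 : ℝ≥0∞) ^ (q - 1) ≠ ⊤ := ENNReal.rpow_ne_top_of_nonneg (by linarith) (by norm_num)
  have hκq : κ ^ q ≠ ⊤ := ENNReal.rpow_ne_top_of_nonneg hq0 hki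
  have hbound : ∀ n, limsup (fun t : ℝ => ENNReal.ofReal (t ^ (-a)) *
      (∫⁻ s in Set.Icc (-t) t, ENNReal.ofReal (‖(∫ u in Set.Ioi 0, R u (f (s - u))) -
        ∫ u in Set.Ioi 0, R u (P n (s - u))‖ ^ q)) ^ (1 / p)) atTop ≤
      (((2 : ℝ≥0∞) ^ (q - 1) * κ ^ q) ^ (1 / p) * ENNReal.ofReal (2 ^ a)) *
      limsup (fun t : ℝ => ENNReal.ofReal (t ^ (-a)) *
        (∫⁻ s in Set.Icc (-t) t, ENNReal.ofReal (‖f s - P n s‖ ^ q)) ^ (1 / p)) atTop := by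
    intro n
    obtain ⟨C, hC0, hC⟩ := trig_bdd (hP n)
    have hPm : StronglyMeasurable (P n) := (trig_cont (hP n)).stronglyMeasurable
    have hPg : ∀ t, ‖P n t‖ ≤ C * (1 + |t|) ^ b := fun t => (hC t).trans
      (le_mul_of_one_le_right hC0 (Real.one_le_rpow (by linarith [abs_nonneg t]) hb))
    set g : ℝ → X := fun s => f s - P n s with hgdef
    have hgm : StronglyMeasurable g := hfmeas.sub hPm
    set B := M₀ + C with hBdef
    have hB0 : 0 ≤ B := by positivity
    have hgg : ∀ t, ‖g t‖ ≤ B * (1 + |t|) ^ b := fun t => by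
      calc ‖g t‖ ≤ ‖f t‖ + ‖P n t‖ := norm_sub_le _ _
        _ ≤ _ := by rw [hBdef, add_mul]; exact add_le_add (hfgrow t) (hPg t)
    set h : ℝ → ℝ≥0∞ := fun s => ‖g s‖ₑ with hh
    have hhm : Measurable h := hgm.enorm
    set η : ℝ → ℝ≥0∞ := fun t => ENNReal.ofReal (B * 2 ^ b) * ∫⁻ u in Set.Ioi t, W u with hη
    have hηlim : Tendsto η atTop (𝓝 0) := by
      have := ENNReal.Tendsto.const_mul htail
        (Or.inr (ENNReal.ofReal_ne_top (r := B * 2 ^ b)))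
      rwa [mul_zero] at this
    refine limsup_aux a p α hα hp hap _ _ hc hκq _ _ η hηlim ?_
    intro t ht
    have ht0 : 0 < t := by linarith
    simp only [enq _ hq0]
    have hpt : ∀ s ∈ Set.Icc (-t) t, ‖(∫ u in Set.Ioi 0, R u (f (s - u))) -
        ∫ u in Set.Ioi 0, R u (P n (s - u))‖ₑ ≤
        (∫⁻ u in Set.Ioc 0 t, k u * h (s - u)) + η t := by
      intro s hs
      rw [← integral_sub
        (conv_integrable R hRcont M β γ hM hβ hγ hR f hfmeas b M₀ hb hbγ hM₀.le hfgrow s)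
        (conv_integrable R hRcont M β γ hM hβ hγ hR (P n) hPm b C hb hbγ hC0 hPg s)]
      refine (enorm_integral_le_lintegral_enorm _).trans ?_
      calc ∫⁻ u in Set.Ioi 0, ‖R u (f (s - u)) - R u (P n (s - u))‖ₑ
          ≤ ∫⁻ u in Set.Ioi 0, k u * h (s - u) := by
            refine setLIntegral_mono' measurableSet_Ioi fun u hu => ?_
            rw [← map_sub, ← ofReal_norm]
            simp only [hk, hh]
            rw [← ofReal_norm, ← ENNReal.ofReal_mul (kern_nonneg hM hu)]
            apply ENNReal.ofReal_le_ofReal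
            exact ((R u).le_opNorm _).trans (by gcongr; exact hR u hu)
        _ = (∫⁻ u in Set.Ioc 0 t, k u * h (s - u)) + ∫⁻ u in Set.Ioi t, k u * h (s - u) := by
            rw [← lintegral_union measurableSet_Ioi Set.Ioc_disjoint_Ioi_same,
              Set.Ioc_union_Ioi_eq_Ioi ht0.le]
        _ ≤ _ := by
            gcongr
            simp only [hη]
            rw [← lintegral_const_mul' _ _ ENNReal.ofReal_ne_top]
            refine setLIntegral_mono' measurableSet_Ioi fun u hu => ?_
            have hut : t < u := hu
            have hu0 : 0 < u := by linarith
            simp only [hWdef, hh]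
            rw [mul_left_comm, ← ofReal_norm, ← ENNReal.ofReal_mul (p := B * 2 ^ b) (by positivity)]
            refine mul_le_mul_right (ENNReal.ofReal_le_ofReal ?_) _
            refine (hgg _).trans ?_
            rw [mul_assoc, ← Real.mul_rpow (by norm_num) (by positivity)]
            gcongr
            have h1 : |s - u| ≤ |s| + |u| := abs_sub _ _
            have h2 : |s| ≤ t := abs_le.2 hs
            rw [abs_of_pos hu0] at h1
            linarith
    calc ∫⁻ s in Set.Icc (-t) t, ‖(∫ u in Set.Ioi 0, R u (f (s - u))) -
        ∫ u in Set.Ioi 0, R u (P n (s - u))‖ₑ ^ q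
        ≤ ∫⁻ s in Set.Icc (-t) t, (2 : ℝ≥0∞) ^ (q - 1) *
          ((∫⁻ u in Set.Ioc 0 t, k u * h (s - u)) ^ q + η t ^ q) := by
          refine setLIntegral_mono' measurableSet_Icc fun s hs => ?_
          exact (ENNReal.rpow_le_rpow (hpt s hs) hq0).trans
            (ENNReal.rpow_add_le_mul_rpow_add_rpow _ _ hαp)
      _ = (2 : ℝ≥0∞) ^ (q - 1) * ((∫⁻ s in Set.Icc (-t) t,
          (∫⁻ u in Set.Ioc 0 t, k u * h (s - u)) ^ q) + ENNReal.ofReal (2 * t) * η t ^ q) := by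
          rw [lintegral_const_mul' _ _ hc, lintegral_add_right _ measurable_const,
            setLIntegral_const, Real.volume_Icc, mul_comm (η t ^ q)]
          congr 4
          ring
      _ ≤ _ := by
          gcongr
          exact young_aux k h hkm hhm hkt hki q hαp t
  have hfin : ((2 : ℝ≥0∞) ^ (q - 1) * κ ^ q) ^ (1 / p) * ENNReal.ofReal (2 ^ a) ≠ ⊤ :=
    ENNReal.mul_ne_top (ENNReal.rpow_ne_top_of_nonneg (by positivity) (ENNReal.mul_ne_top hc hκq))
      ENNReal.ofReal_ne_top
  have hlim2 := ENNReal.Tendsto.const_mul hlim (Or.inr hfin)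
  rw [mul_zero] at hlim2
  exact tendsto_of_tendsto_of_tendsto_of_le_of_le tendsto_const_nhds hlim2
    (fun _ => zero_le) hbound

end

/-- invariance of the class `e-(x^α,t^{−a})-B^p(ℝ : ·)` under the
infinite convolution product `F(t) = ∫_{−∞}^t R(t−s) f(s) ds`, for a polynomially
bounded inhomogeneity `f`. -/
theorem besicovitch_stmt17 {X Y : Type*}
    [NormedAddCommGroup X] [NormedSpace ℂ X] [CompleteSpace X]
    [NormedAddCommGroup Y] [NormedSpace ℂ Y] [CompleteSpace Y]
    (R : ℝ → X →L[ℂ] Y)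
    (hRcont : ∀ x : X, ContinuousOn (fun t => R t x) (Set.Ioi 0))
    (M β γ : ℝ) (hM : 0 < M) (hβ : β ∈ Set.Ioc (0 : ℝ) 1) (hγ : 1 < γ)
    (hR : ∀ t : ℝ, 0 < t → ‖R t‖ ≤ M * t ^ (β - 1) / (1 + t ^ γ))
    (a α p : ℝ) (ha : 0 < a) (hα : 0 < α) (hp : 1 ≤ p)
    (hαp : 1 ≤ α * p) (hap : 1 ≤ a * p)
    (hcase1 : 1 < α * p → -1 < α * p * (β - 1) / (α * p - 1))
    (hcase2 : α * p = 1 → β = 1)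
    (f : ℝ → X) (hfmeas : StronglyMeasurable f)
    (hf : MemBes1 α a p f)
    (b : ℝ) (hb : 0 ≤ b) (hbγ : b < γ - β)
    (M₀ : ℝ) (hM₀ : 0 < M₀)
    (hfgrow : ∀ t : ℝ, ‖f t‖ ≤ M₀ * (1 + |t|) ^ b) :
    (∀ t : ℝ, IntegrableOn (fun s => R (t - s) (f s)) (Set.Iio t)) ∧
    Continuous (fun t : ℝ => ∫ s in Set.Iio t, R (t - s) (f s)) ∧
    MemBes1 α a p (fun t : ℝ => ∫ s in Set.Iio t, R (t - s) (f s)) ∧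
    (∃ M' : ℝ, 0 < M' ∧ ∀ t : ℝ,
      ‖∫ s in Set.Iio t, R (t - s) (f s)‖ ≤ M' * (1 + |t|) ^ b) := by
  have hFe : ∀ t : ℝ, ∫ s in Set.Iio t, R (t - s) (f s) =
      ∫ u in Set.Ioi 0, R u (f (t - u)) := by
    intro t
    have h := setIntegral_flip (fun s => R (t - s) (f s)) t 0
    simp only [_root_.sub_sub_cancel, sub_zero] at h
    exact h.symm
  simp only [hFe]
  refine ⟨fun t => ?_, ?_, ?_, ?_⟩
  · have h := integrableOn_flip (fun s => R (t - s) (f s)) t 0 (by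
      simp only [_root_.sub_sub_cancel]
      exact conv_integrable R hRcont M β γ hM hβ hγ hR f hfmeas b M₀ hb hbγ hM₀.le hfgrow t)
    rwa [sub_zero] at h
  · exact conv_cont R hRcont M β γ hM hβ hγ hR f hfmeas b M₀ hb hbγ hM₀.le hfgrow
  · exact conv_bes R hRcont M β γ hM hβ hγ hR a α p hα hp hαp hap f hfmeas hf b hb hbγ M₀ hM₀
      hfgrow
  · set J := ∫ u in Set.Ioi 0, (M * u ^ (β - 1) / (1 + u ^ γ) * (1 + u) ^ b) with hJ
    have hJ0 : 0 ≤ J := by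
      apply setIntegral_nonneg measurableSet_Ioi
      intro u hu
      have : 0 < u := hu
      positivity
    refine ⟨M₀ * (J + 1), by positivity, fun t => ?_⟩
    refine (conv_norm_le R M β γ hM hβ hγ hR f b M₀ hb hbγ hM₀.le hfgrow _ measurableSet_Ioi
      subset_rfl t).trans ?_
    rw [← hJ]
    have : 0 ≤ M₀ * (1 + |t|) ^ b := by positivity
    nlinarith
end
end
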